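/- arXiv:1810.03566 — 3 statements merged into one kernel-verified Lean document; each statement's English description precedes it below -/
import Mathlib

section
/- Let G be a second countable locally compact group equipped with a right-invariant metric d inducing the topology of G and whose closed balls are compact, let N be a closed normal subgroup of G, let W be a closed subgroup of G with G = WN, let π : G → G/N be the quotient homomorphism, and equip W₀ = G/N with the quotient metric d_{W₀}(x,y) = inf{ d(v,z) : v, z ∈ W, π(v) = x, π(z) = y }. Then there exists a Borel measurable map χ : W₀ → W such that for all x ∈ W₀, π(χ(x)) = x and d(χ(x), e) = d_{W₀}(x, π(e)), where e is the identity of G. -/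
open MeasureTheory Metric Set

noncomputable section

/-- The quotient metric on `G ⧸ N` obtained from `W`:
`d_{W₀}(x, y) = inf { d(v, z) : v, z ∈ W, π v = x, π z = y }`. -/
def quotDist {G : Type*} [MetricSpace G] [Group G] (W N : Subgroup G) [N.Normal]
    (x y : G ⧸ N) : ℝ :=
  sInf {t : ℝ | ∃ v ∈ W, ∃ z ∈ W, (QuotientGroup.mk v : G ⧸ N) = x ∧
    (QuotientGroup.mk z : G ⧸ N) = y ∧ t = dist v z}

/-- Points of `A` closest to `g`. -/
def minSet {G : Type*} [MetricSpace G] (A : Set G) (g : G) : Set G :=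
  {w | w ∈ A ∧ ∀ v ∈ A, dist w g ≤ dist v g}

theorem minSet_isClosed {G : Type*} [MetricSpace G] {A : Set G} (hA : IsClosed A) (g : G) :
    IsClosed (minSet A g) := by
  have : minSet A g = A ∩ ⋂ v ∈ A, {w | dist w g ≤ dist v g} := by
    ext w; simp [minSet]
  rw [this]
  refine hA.inter (isClosed_biInter fun v _ => ?_)
  exact isClosed_le (by fun_prop) (by fun_prop)

theorem minSet_nonempty {G : Type*} [MetricSpace G] [ProperSpace G] {A : Set G}
    (hA : IsClosed A) (hne : A.Nonempty) (g : G) : (minSet A g).Nonempty := by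
  obtain ⟨w, hw, h⟩ := hA.exists_infDist_eq_dist hne g
  refine ⟨w, hw, fun v hv => ?_⟩
  rw [dist_comm w, dist_comm v, ← h]
  exact infDist_le_dist_of_mem hv

theorem minSet_good {G X : Type*} [MetricSpace G] [ProperSpace G] [MeasurableSpace X]
    (F : X → Set G) (hc : ∀ x, IsClosed (F x)) (hne : ∀ x, (F x).Nonempty)
    (hg : ∀ K, IsClosed K → MeasurableSet {x | (F x ∩ K).Nonempty}) (g : G) :
    ∀ K, IsClosed K → MeasurableSet {x | (minSet (F x) g ∩ K).Nonempty} := by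
  intro K hK
  have : {x | (minSet (F x) g ∩ K).Nonempty} = {x | (F x ∩ K).Nonempty} ∩
      ⋂ q : ℚ, ({x | (F x ∩ closedBall g (q : ℝ)).Nonempty}ᶜ ∪
        {x | (F x ∩ (K ∩ closedBall g (q : ℝ))).Nonempty}) := by
    ext x
    simp only [mem_inter_iff, mem_iInter, mem_union, mem_compl_iff, mem_setOf_eq]
    constructor
    · rintro ⟨w, ⟨hw, hmin⟩, hwK⟩
      refine ⟨⟨w, hw, hwK⟩, fun q => ?_⟩
      by_cases h : (F x ∩ closedBall g (q : ℝ)).Nonempty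
      · right
        obtain ⟨v, hv, hvq⟩ := h
        exact ⟨w, hw, hwK, (hmin v hv).trans hvq⟩
      · exact Or.inl h
    · rintro ⟨hn, hq⟩
      obtain ⟨w, ⟨hw, hwK⟩, hmin⟩ := minSet_nonempty ((hc x).inter hK) hn g
      refine ⟨w, ⟨hw, fun v hv => ?_⟩, hwK⟩
      by_contra! hlt
      obtain ⟨q, h1, h2⟩ := exists_rat_btwn hlt
      rcases hq q with h | ⟨u, hu, huK, huq⟩
      · exact h ⟨v, hv, h1.le⟩
      · have := hmin u ⟨hu, huK⟩
        have h3 : dist u g ≤ q := huq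
        linarith
  rw [this]
  exact (hg K hK).inter (MeasurableSet.iInter fun q =>
    (hg _ isClosed_closedBall).compl.union (hg _ (hK.inter isClosed_closedBall)))

/-- Iterated lexicographic minimization. -/
def iterMin {G : Type*} [MetricSpace G] (g : ℕ → G) (A : Set G) : ℕ → Set G
  | 0 => A
  | n + 1 => minSet (iterMin g A n) (g n)

theorem exists_lex_selection {G X : Type*} [MetricSpace G] [ProperSpace G]
    [MeasurableSpace G] [BorelSpace G] [MeasurableSpace X]
    (F : X → Set G) (hc : ∀ x, IsClosed (F x)) (hne : ∀ x, (F x).Nonempty)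
    (hg : ∀ K, IsClosed K → MeasurableSet {x | (F x ∩ K).Nonempty}) (e : G) :
    ∃ χ : X → G, Measurable χ ∧ ∀ x, χ x ∈ minSet (F x) e := by
  haveI : Nonempty G := ⟨e⟩
  let g : ℕ → G := fun n => Nat.casesOn n e (fun k => TopologicalSpace.denseSeq G k)
  have hcl : ∀ n x, IsClosed (iterMin g (F x) n) := by
    intro n
    induction n with
    | zero => exact hc
    | succ n ih => exact fun x => minSet_isClosed (ih x) _
  have hnon : ∀ n x, (iterMin g (F x) n).Nonempty := by
    intro n
    induction n with
    | zero => exact hne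
    | succ n ih => exact fun x => minSet_nonempty (hcl n x) (ih x) _
  have hgood : ∀ n K, IsClosed K → MeasurableSet {x | (iterMin g (F x) n ∩ K).Nonempty} := by
    intro n
    induction n with
    | zero => exact hg
    | succ n ih => exact minSet_good (fun x => iterMin g (F x) n) (hcl n) (hnon n) ih _
  have hdec : ∀ n x, iterMin g (F x) (n + 1) ⊆ iterMin g (F x) n := fun n x w hw => hw.1
  have hcomp : ∀ x, IsCompact (iterMin g (F x) 1) := by
    intro x
    obtain ⟨v, hv⟩ := hne x
    exact (isCompact_closedBall e (dist v e)).of_isClosed_subset (hcl 1 x)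
      (fun w hw => hw.2 v hv)
  have hint : ∀ x K, IsClosed K → (∀ n, (iterMin g (F x) (n + 1) ∩ K).Nonempty) →
      (⋂ n, (iterMin g (F x) (n + 1) ∩ K)).Nonempty := by
    intro x K hK h
    exact IsCompact.nonempty_iInter_of_sequence_nonempty_isCompact_isClosed _
      (fun n => inter_subset_inter_left _ (hdec _ x)) h ((hcomp x).inter_right hK)
      (fun n => (hcl _ x).inter hK)
  have huniq : ∀ x w w', (∀ n, w ∈ iterMin g (F x) (n + 1)) →
      (∀ n, w' ∈ iterMin g (F x) (n + 1)) → w = w' := by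
    intro x w w' h h'
    have h1 : ∀ n, dist w (g n) = dist w' (g n) := fun n =>
      le_antisymm ((h n).2 _ (h' n).1) ((h' n).2 _ (h n).1)
    have h2 : (fun z => dist w z) = fun z => dist w' z := by
      refine Continuous.ext_on (TopologicalSpace.denseRange_denseSeq G) (by fun_prop)
        (by fun_prop) ?_
      rintro _ ⟨n, rfl⟩
      exact h1 (n + 1)
    have h3 := congrFun h2 w'
    simpa using h3
  have hex : ∀ x, ∃ w, ∀ n, w ∈ iterMin g (F x) (n + 1) := by
    intro x
    obtain ⟨w, hw⟩ := hint x univ isClosed_univ (fun n => by simpa using hnon (n + 1) x)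
    exact ⟨w, fun n => (mem_iInter.1 hw n).1⟩
  choose χ hχ using hex
  refine ⟨χ, measurable_of_isClosed fun K hK => ?_, fun x => hχ x 0⟩
  have : χ ⁻¹' K = ⋂ n, {x | (iterMin g (F x) (n + 1) ∩ K).Nonempty} := by
    ext x
    simp only [mem_preimage, mem_iInter, mem_setOf_eq]
    constructor
    · exact fun h n => ⟨χ x, hχ x n, h⟩
    · intro h
      obtain ⟨w, hw⟩ := hint x K hK h
      rw [huniq x (χ x) w (hχ x) (fun n => (mem_iInter.1 hw n).1)]
      exact (mem_iInter.1 hw 0).2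
  rw [this]
  exact MeasurableSet.iInter fun n => hgood _ K hK

/-- There is a Borel measurable section `χ : G ⧸ N → W ⊆ G` of the quotient map which is
distance minimizing: `d(χ x, e) = d_{W₀}(x, π e)`. -/
theorem exists_measurable_minimizing_section
    {G : Type*} [MetricSpace G] [Group G] [IsTopologicalGroup G]
    [SecondCountableTopology G] [ProperSpace G]
    [MeasurableSpace G] [BorelSpace G]
    (hright : ∀ x y g : G, dist (x * g) (y * g) = dist x y)
    (N : Subgroup G) [N.Normal] (hNclosed : IsClosed (N : Set G))
    (W : Subgroup G) (hWclosed : IsClosed (W : Set G))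
    (hWN : ∀ g : G, ∃ w ∈ W, ∃ n ∈ N, g = w * n)
    [MeasurableSpace (G ⧸ N)] [BorelSpace (G ⧸ N)] :
    ∃ χ : G ⧸ N → G, Measurable χ ∧ ∀ x : G ⧸ N,
      χ x ∈ W ∧ (QuotientGroup.mk (χ x) : G ⧸ N) = x ∧
      dist (χ x) (1 : G) = quotDist W N x ((1 : G) : G ⧸ N) := by
  haveI := hNclosed
  have hcont : Continuous (fun g : G => (QuotientGroup.mk g : G ⧸ N)) :=
    QuotientGroup.continuous_mk
  obtain ⟨χ, hχm, hχ⟩ := exists_lex_selection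
    (fun x : G ⧸ N => {w : G | w ∈ W ∧ (QuotientGroup.mk w : G ⧸ N) = x})
    (fun x => hWclosed.inter (isClosed_singleton.preimage hcont))
    (fun x => by
      obtain ⟨g, rfl⟩ := QuotientGroup.mk_surjective x
      obtain ⟨w, hw, n, hn, rfl⟩ := hWN g
      exact ⟨w, hw, (QuotientGroup.mk_mul_of_mem w hn).symm⟩)
    (fun K hK => by
      have : {x : G ⧸ N | ({w : G | w ∈ W ∧ (QuotientGroup.mk w : G ⧸ N) = x} ∩ K).Nonempty} =
          ⋃ n : ℕ, (fun g : G => (QuotientGroup.mk g : G ⧸ N)) ''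
            (closedBall (1 : G) n ∩ ((W : Set G) ∩ K)) := by
        ext x
        simp only [mem_iUnion, mem_setOf_eq]
        constructor
        · rintro ⟨w, ⟨hw, hx⟩, hk⟩
          obtain ⟨n, hn⟩ := exists_nat_ge (dist w 1)
          exact ⟨n, w, ⟨hn, hw, hk⟩, hx⟩
        · rintro ⟨n, w, ⟨_, hw, hk⟩, hx⟩
          exact ⟨w, ⟨hw, hx⟩, hk⟩
      rw [this]
      refine MeasurableSet.iUnion fun n => IsClosed.measurableSet ?_
      exact (((isCompact_closedBall (1 : G) n).inter_right
        (hWclosed.inter hK)).image hcont).isClosed)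
    (1 : G)
  refine ⟨χ, hχm, fun x => ⟨(hχ x).1.1, (hχ x).1.2, ?_⟩⟩
  obtain ⟨⟨h1, h2⟩, h3⟩ := hχ x
  have : IsLeast {t : ℝ | ∃ v ∈ W, ∃ z ∈ W, (QuotientGroup.mk v : G ⧸ N) = x ∧
      (QuotientGroup.mk z : G ⧸ N) = ((1 : G) : G ⧸ N) ∧ t = dist v z} (dist (χ x) 1) := by
    refine ⟨⟨χ x, h1, 1, W.one_mem, h2, rfl, rfl⟩, ?_⟩
    rintro t ⟨v, hv, z, hz, hvx, hz1, rfl⟩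
    have h4 := h3 (v * z⁻¹) ⟨W.mul_mem hv (W.inv_mem hz), by
      rw [QuotientGroup.mk_mul, QuotientGroup.mk_inv, hz1, hvx]; simp⟩
    have h5 := hright v z z⁻¹
    rw [mul_inv_cancel] at h5
    rwa [h5] at h4
  exact this.csInf_eq.symm

end
end

section
/- Let G be a connected and simply connected solvable Lie group with Lie algebra 𝔤, let 𝔴 be a Cartan subalgebra of 𝔤, let W be the connected Lie subgroup of G corresponding to 𝔴, and let N be the connected Lie subgroup of G corresponding to 𝔫 = [𝔤, 𝔤]. Then W and N are simply connected, and G = WN (every element of G is a product of an element of W and an element of N). -/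
open Manifold

noncomputable section

/-- `ψ : ℝ → G` is a (smooth) one-parameter subgroup with direction `v` in the tangent
space at the identity. -/
def IsOneParamSubgroup {E : Type*} [NormedAddCommGroup E] [NormedSpace ℝ E]
    {G : Type*} [TopologicalSpace G] [ChartedSpace E G] [Group G]
    (ψ : ℝ → G) (v : E) : Prop :=
  ψ 0 = 1 ∧ (∀ s t : ℝ, ψ (s + t) = ψ s * ψ t) ∧
  ContMDiff 𝓘(ℝ, ℝ) 𝓘(ℝ, E) (⊤ : ℕ∞) ψ ∧
  (mfderiv 𝓘(ℝ, ℝ) 𝓘(ℝ, E) ψ 0 (1 : ℝ) : E) = v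

/-- The adjoint action of `g` on the tangent space at the identity: the differential of
conjugation by `g` at the identity. -/
def AdMap {E : Type*} [NormedAddCommGroup E] [NormedSpace ℝ E]
    {G : Type*} [TopologicalSpace G] [ChartedSpace E G] [Group G]
    (g : G) (w : E) : E :=
  (mfderiv 𝓘(ℝ, E) 𝓘(ℝ, E) (fun x : G => g * x * g⁻¹) (1 : G) w : E)

/-- The connected (integral) subgroup of `G` corresponding to a set `S` of Lie algebra
elements (via the identification `eq` of the Lie algebra with the tangent space at the
identity): the subgroup generated by the one-parameter subgroups with directions in
`S`. -/
def integralSubgroup {E : Type*} [NormedAddCommGroup E] [NormedSpace ℝ E]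
    {G : Type*} [TopologicalSpace G] [ChartedSpace E G] [Group G]
    {L : Type*} [LieRing L] [LieAlgebra ℝ L] (eq : L ≃ₗ[ℝ] E) (S : Set L) : Subgroup G :=
  Subgroup.closure {g : G | ∃ v ∈ S, ∃ ψ : ℝ → G, IsOneParamSubgroup ψ (eq v) ∧ ∃ t : ℝ, g = ψ t}


namespace LieAux

set_option linter.unusedSectionVars false

section Basic

universe u uG
variable {E : Type u} [NormedAddCommGroup E] [NormedSpace ℝ E]
  {G : Type uG} [TopologicalSpace G] [Group G] [ChartedSpace E G]

/-- The curve `c` passes through `1` at time `t` with velocity `v`. -/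
def D (c : ℝ → G) (t : ℝ) (v : E) : Prop :=
  c t = 1 ∧ HasMFDerivAt 𝓘(ℝ, ℝ) 𝓘(ℝ, E) c t
    ((1 : ℝ →L[ℝ] ℝ).smulRight v : ℝ →L[ℝ] E)

theorem D_iff {c : ℝ → G} {t : ℝ} {v : E} :
    D c t v ↔ c t = 1 ∧ ContinuousAt c t ∧
      HasDerivAt (fun s => chartAt E (1 : G) (c s)) v t := by
  unfold D
  constructor
  · rintro ⟨h1, h2⟩
    refine ⟨h1, h2.1, ?_⟩
    have : HasFDerivWithinAt (fun s => chartAt E (c t) (c s))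
      ((1 : ℝ →L[ℝ] ℝ).smulRight v : ℝ →L[ℝ] E) (Set.range (id : ℝ → ℝ)) t := h2.2
    rw [h1, Set.range_id, hasFDerivWithinAt_univ] at this
    simpa using this.hasDerivAt
  · rintro ⟨h1, h2, h3⟩
    refine ⟨h1, h2, ?_⟩
    have : HasFDerivWithinAt (fun s => chartAt E (c t) (c s))
      ((1 : ℝ →L[ℝ] ℝ).smulRight v : ℝ →L[ℝ] E) (Set.range (id : ℝ → ℝ)) t := by
      rw [h1, Set.range_id, hasFDerivWithinAt_univ]
      have e : ((1 : ℝ →L[ℝ] ℝ).smulRight v : ℝ →L[ℝ] E) =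
          ContinuousLinearMap.toSpanSingleton ℝ v := by
        apply ContinuousLinearMap.ext_ring; simp
      rw [e]
      exact h3.hasFDerivAt
    exact this

theorem D.unique {c : ℝ → G} {t : ℝ} {v w : E} (h : D c t v) (h' : D c t w) : v = w :=
  (D_iff.1 h).2.2.unique (D_iff.1 h').2.2

theorem D.comp {F : G → G} {F' : E →L[ℝ] E} (hF1 : F 1 = 1)
    (hF : HasMFDerivAt 𝓘(ℝ, E) 𝓘(ℝ, E) F 1 F') {c : ℝ → G} {t : ℝ} {v : E} (h : D c t v) :
    D (fun s => F (c s)) t (F' v) := by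
  refine ⟨by simp [h.1, hF1], ?_⟩
  have key : ∀ x : G, x = 1 → HasMFDerivAt 𝓘(ℝ, E) 𝓘(ℝ, E) F x F' := by
    rintro x rfl; exact hF
  have h2 := HasMFDerivAt.comp t (key _ h.1) h.2
  have e : ((1 : ℝ →L[ℝ] ℝ).smulRight (F' v) : ℝ →L[ℝ] E) =
    F'.comp ((1 : ℝ →L[ℝ] ℝ).smulRight v : ℝ →L[ℝ] E) := by ext; simp
  rw [e]
  exact h2

theorem D.const (t : ℝ) : D (fun _ => (1 : G)) t (0 : E) := by
  rw [D_iff]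
  exact ⟨rfl, continuousAt_const, hasDerivAt_const _ _⟩

variable [LieGroup 𝓘(ℝ, E) (⊤ : ℕ∞) G]

theorem ne_zero' : ((⊤ : ℕ∞) : WithTop ℕ∞) ≠ 0 := by simp

theorem contMDiff_conj (g : G) :
    ContMDiff 𝓘(ℝ, E) 𝓘(ℝ, E) (⊤ : ℕ∞) (fun x : G => g * x * g⁻¹) :=
  (contMDiff_const.mul contMDiff_id).mul contMDiff_const

theorem hasMFDerivAt_conj (g : G) : HasMFDerivAt 𝓘(ℝ, E) 𝓘(ℝ, E) (fun x : G => g * x * g⁻¹) 1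
    (mfderiv 𝓘(ℝ, E) 𝓘(ℝ, E) (fun x : G => g * x * g⁻¹) (1 : G)) :=
  ((contMDiff_conj g).mdifferentiable ne_zero' 1).hasMFDerivAt

/-- The adjoint action as a continuous linear map. -/
def AdL (g : G) : E →L[ℝ] E := mfderiv 𝓘(ℝ, E) 𝓘(ℝ, E) (fun x : G => g * x * g⁻¹) (1 : G)

theorem AdL_apply (g : G) (v : E) : AdL g v = AdMap g v := rfl

theorem D.conj {c : ℝ → G} {t : ℝ} {v : E} (h : D c t v) (g : G) :
    D (fun s => g * c s * g⁻¹) t (AdL g v) :=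
  D.comp (F := fun x : G => g * x * g⁻¹) (F' := AdL g) (by simp) (hasMFDerivAt_conj g) h

/-- velocity of a smooth curve through 1 exists -/
theorem D.exists {c : ℝ → G} {t : ℝ} (h1 : c t = 1)
    (h : MDifferentiableAt 𝓘(ℝ, ℝ) 𝓘(ℝ, E) c t) : ∃ v : E, D c t v := by
  obtain ⟨A, hA⟩ : ∃ A : ℝ →L[ℝ] E, HasMFDerivAt 𝓘(ℝ, ℝ) 𝓘(ℝ, E) c t A := ⟨_, h.hasMFDerivAt⟩
  refine ⟨A 1, h1, ?_⟩
  have e : ((1 : ℝ →L[ℝ] ℝ).smulRight (A 1) : ℝ →L[ℝ] E) = A := by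
    apply ContinuousLinearMap.ext_ring; simp
  rw [e]
  exact hA

theorem D.mul {c d : ℝ → G} {t : ℝ} {v w : E} (hc : D c t v) (hd : D d t w) :
    D (fun s => c s * d s) t (v + w) := by
  obtain ⟨A, hA⟩ : ∃ A : E × E →L[ℝ] E, HasMFDerivAt (𝓘(ℝ, E).prod 𝓘(ℝ, E)) 𝓘(ℝ, E)
      (fun p : G × G => p.1 * p.2) ((1 : G), (1 : G)) A :=
    ⟨_, ((contMDiff_mul 𝓘(ℝ, E) (⊤ : ℕ∞)).mdifferentiable ne_zero' _).hasMFDerivAt⟩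
  have key : ∀ {c d : ℝ → G} {t : ℝ} {v w : E} (hc : D c t v) (hd : D d t w),
      D (fun s => c s * d s) t (A (v, w)) := by
    intro c d t v w hc hd
    refine ⟨by simp [hc.1, hd.1], ?_⟩
    have k1 : ∀ x y : G, x = 1 → y = 1 → HasMFDerivAt (𝓘(ℝ, E).prod 𝓘(ℝ, E)) 𝓘(ℝ, E)
      (fun p : G × G => p.1 * p.2) (x, y) A := by
      rintro x y rfl rfl; exact hA
    have := HasMFDerivAt.comp t (k1 _ _ hc.1 hd.1) (hc.2.prodMk hd.2)
    have e : ((1 : ℝ →L[ℝ] ℝ).smulRight (A (v, w)) : ℝ →L[ℝ] E) =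
      A.comp (((1 : ℝ →L[ℝ] ℝ).smulRight v : ℝ →L[ℝ] E).prod
        ((1 : ℝ →L[ℝ] ℝ).smulRight w : ℝ →L[ℝ] E)) := by
      apply ContinuousLinearMap.ext_ring; simp
    rw [e]
    exact this
  have h1 : A (v, 0) = v := by
    have := key hc (D.const t)
    simp only [mul_one] at this
    exact this.unique hc
  have h2 : A (0, w) = w := by
    have := key (D.const t) hd
    simp only [one_mul] at this
    exact this.unique hd
  have : A (v, w) = v + w := by
    conv_rhs => rw [← h1, ← h2, ← map_add]
    simp
  rw [← this]
  exact key hc hd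

theorem D.inv {c : ℝ → G} {t : ℝ} {v : E} (hc : D c t v) : D (fun s => (c s)⁻¹) t (-v) := by
  obtain ⟨A, hA⟩ : ∃ A : E →L[ℝ] E, HasMFDerivAt 𝓘(ℝ, E) 𝓘(ℝ, E)
      (fun p : G => p⁻¹) (1 : G) A :=
    ⟨_, ((contMDiff_inv 𝓘(ℝ, E) (⊤ : ℕ∞)).mdifferentiable ne_zero' _).hasMFDerivAt⟩
  have h := D.comp (by simp) hA hc
  have h2 := hc.mul h
  simp only [mul_inv_cancel] at h2
  have := h2.unique (D.const t)
  rw [neg_eq_of_add_eq_zero_right this]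
  exact h

/-- every vector is a velocity -/
theorem D.exists_curve (v : E) : ∃ c : ℝ → G, D c 0 v := by
  set φ := chartAt E (1 : G)
  have h0 : φ 1 + (0 : ℝ) • v = φ 1 := by simp
  have hc : ContinuousAt (fun s : ℝ => φ 1 + s • v) 0 := by fun_prop
  refine ⟨fun s => φ.symm (φ 1 + s • v), D_iff.2 ⟨?_, ?_, ?_⟩⟩
  · simp [φ]
  · refine ContinuousAt.comp (g := φ.symm) ?_ hc
    rw [h0]
    exact φ.continuousAt_symm (φ.map_source (mem_chart_source E 1))
  · have : HasDerivAt (fun s : ℝ => φ 1 + s • v) v 0 := by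
      simpa using ((hasDerivAt_id (0:ℝ)).smul_const v).const_add (φ 1)
    refine this.congr_of_eventuallyEq ?_
    have : ∀ᶠ s in nhds (0:ℝ), φ 1 + s • v ∈ φ.target := by
      apply hc.eventually_mem
      rw [h0]
      exact φ.open_target.mem_nhds (φ.map_source (mem_chart_source E 1))
    filter_upwards [this] with s hs
    exact φ.right_inv hs

theorem AdL_mul (g h : G) (v : E) : AdL (g * h) v = AdL g (AdL h v) := by
  obtain ⟨c, hc⟩ := D.exists_curve (G := G) v
  refine (hc.conj (g * h)).unique ?_
  have := (hc.conj h).conj g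
  convert this using 2
  group

theorem AdL_one (v : E) : AdL (1 : G) v = v := by
  obtain ⟨c, hc⟩ := D.exists_curve (G := G) v
  refine (hc.conj 1).unique ?_
  simpa using hc

theorem AdL_inv_AdL (g : G) (v : E) : AdL g⁻¹ (AdL g v) = v := by
  rw [← AdL_mul, inv_mul_cancel, AdL_one]

theorem AdL_AdL_inv (g : G) (v : E) : AdL g (AdL g⁻¹ v) = v := by
  rw [← AdL_mul, mul_inv_cancel, AdL_one]

/-- left logarithmic derivative -/
def LD (g : ℝ → G) (t : ℝ) (ξ : E) : Prop := D (fun s => (g t)⁻¹ * g s) t ξ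

theorem LD.unique {g : ℝ → G} {t : ℝ} {v w : E} (h : LD g t v) (h' : LD g t w) : v = w :=
  D.unique h h'

theorem LD.mul {g h : ℝ → G} {t : ℝ} {ξ η : E} (hg : LD g t ξ) (hh : LD h t η) :
    LD (fun s => g s * h s) t (AdL (h t)⁻¹ ξ + η) := by
  have := (D.conj hg (h t)⁻¹).mul hh
  unfold LD
  convert this using 2
  group

theorem LD.inv {g : ℝ → G} {t : ℝ} {ξ : E} (hg : LD g t ξ) :
    LD (fun s => (g s)⁻¹) t (- AdL (g t) ξ) := by
  have := (D.inv hg).conj (g t)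
  unfold LD
  rw [map_neg] at this
  convert this using 2
  group

theorem LD.const_mul {g : ℝ → G} {t : ℝ} {ξ : E} (hg : LD g t ξ) (a : G) :
    LD (fun s => a * g s) t ξ := by
  unfold LD at *
  convert hg using 2
  group

theorem LD.const (a : G) (t : ℝ) : LD (fun _ => a) t (0 : E) := by
  unfold LD
  simpa using D.const t

theorem D_reparam {ψ : ℝ → G} {v : E} (h : D ψ 0 v) {s : ℝ → ℝ} {t s' : ℝ}
    (h0 : s t = 0) (hs : HasDerivAt s s' t) : D (fun u => ψ (s u)) t (s' • v) := by
  rw [D_iff] at *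
  refine ⟨by rw [h0]; exact h.1, ?_, ?_⟩
  · refine ContinuousAt.comp (g := ψ) ?_ hs.continuousAt
    rw [h0]; exact h.2.1
  · have := h.2.2
    rw [← h0] at this
    exact this.scomp t hs

theorem one_D {ψ : ℝ → G} {v : E} (h : IsOneParamSubgroup ψ v) : D ψ 0 v := by
  obtain ⟨h0, -, hs, rfl⟩ := h
  obtain ⟨w, hw⟩ := D.exists h0 (hs.mdifferentiable ne_zero' 0)
  have : (mfderiv 𝓘(ℝ, ℝ) 𝓘(ℝ, E) ψ 0 (1 : ℝ) : E) = w := by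
    rw [hw.2.mfderiv]
    change ((1 : ℝ →L[ℝ] ℝ).smulRight w : ℝ →L[ℝ] E) 1 = w
    simp
  rw [this]; exact hw

theorem one_neg {ψ : ℝ → G} {v : E} (h : IsOneParamSubgroup ψ v) (t : ℝ) : (ψ t)⁻¹ = ψ (-t) := by
  rw [inv_eq_iff_mul_eq_one, ← h.2.1, add_neg_cancel, h.1]

theorem one_LD {ψ : ℝ → G} {v : E} (h : IsOneParamSubgroup ψ v) {s : ℝ → ℝ} {t s' : ℝ}
    (hs : HasDerivAt s s' t) : LD (fun u => ψ (s u)) t (s' • v) := by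
  unfold LD
  have := D_reparam (one_D h) (s := fun u => - s t + s u) (t := t) (s' := s') (by simp)
    (hs.const_add _)
  convert this using 2 with u
  rw [h.2.1, one_neg h]

theorem LD.continuousAt [IsTopologicalGroup G] {g : ℝ → G} {t : ℝ} {ξ : E} (h : LD g t ξ) :
    ContinuousAt g t := by
  have := (D_iff.1 h).2.1
  have h2 := this.const_mul (g t)
  simpa using h2

theorem LD_zero_const [IsTopologicalGroup G] {g : ℝ → G} (h : ∀ t, LD g t (0 : E)) (t t' : ℝ) :
    g t = g t' := by
  have hcont : Continuous g := continuous_iff_continuousAt.2 fun t => (h t).continuousAt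
  have : IsLocallyConstant g := by
    rw [IsLocallyConstant.iff_eventually_eq]
    intro t0
    set φ := chartAt E (1 : G) with hφ
    have hs : ∀ᶠ s in nhds t0, (g t0)⁻¹ * g s ∈ φ.source := by
      have : ContinuousAt (fun s => (g t0)⁻¹ * g s) t0 := (hcont.const_mul _).continuousAt
      apply this.eventually_mem
      simp only [inv_mul_cancel]
      exact φ.open_source.mem_nhds (mem_chart_source E 1)
    obtain ⟨ε, hε, hB⟩ := Metric.eventually_nhds_iff_ball.1 hs
    have hder : ∀ t ∈ Metric.ball t0 ε,
        HasDerivAt (fun s => φ ((g t0)⁻¹ * g s)) 0 t := by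
      intro t ht
      set a := (g t0)⁻¹ * g t with ha
      have ha' : a ∈ φ.source := hB t ht
      have hm : MDifferentiableAt 𝓘(ℝ, E) 𝓘(ℝ, E) (fun x : G => φ (a * x)) 1 := by
        have h1 : ContMDiffAt 𝓘(ℝ, E) 𝓘(ℝ, E) (⊤ : ℕ∞) φ (a * 1) := by
          have := contMDiffOn_chart (I := 𝓘(ℝ, E)) (n := (⊤ : ℕ∞)) (x := (1 : G))
          exact this.contMDiffAt (φ.open_source.mem_nhds (by simpa using ha'))
        have h2 : ContMDiffAt 𝓘(ℝ, E) 𝓘(ℝ, E) (⊤ : ℕ∞) (fun x : G => a * x) 1 :=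
          (contMDiff_const.mul contMDiff_id).contMDiffAt
        exact (ContMDiffAt.comp (1 : G) h1 h2).mdifferentiableAt ne_zero'
      obtain ⟨A, hA⟩ : ∃ A : E →L[ℝ] E, HasMFDerivAt 𝓘(ℝ, E) 𝓘(ℝ, E)
        (fun x : G => φ (a * x)) 1 A := ⟨_, hm.hasMFDerivAt⟩
      have key : ∀ x : G, x = 1 → HasMFDerivAt 𝓘(ℝ, E) 𝓘(ℝ, E) (fun x : G => φ (a * x)) x A := by
        rintro x rfl; exact hA
      have h3 := HasMFDerivAt.comp t (key _ (h t).1) (h t).2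
      have h4 : HasFDerivAt ((fun x : G => φ (a * x)) ∘ fun s => (g t)⁻¹ * g s)
        (A.comp ((1 : ℝ →L[ℝ] ℝ).smulRight (0 : E) : ℝ →L[ℝ] E)) t :=
        hasMFDerivAt_iff_hasFDerivAt.1 h3
      have h5 : ((fun x : G => φ (a * x)) ∘ fun s => (g t)⁻¹ * g s) =
          fun s => φ ((g t0)⁻¹ * g s) := by
        ext s; simp [ha, mul_assoc]
      rw [h5] at h4
      simpa using h4.hasDerivAt
    have hc : ∀ t ∈ Metric.ball t0 ε, φ ((g t0)⁻¹ * g t) = φ ((g t0)⁻¹ * g t0) := by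
      intro t ht
      exact Convex.is_const_of_fderivWithin_eq_zero (𝕜 := ℝ)
        (f := fun t => φ ((g t0)⁻¹ * g t)) (convex_ball t0 ε)
        (fun x hx => (hder x hx).differentiableAt.differentiableWithinAt)
        (fun x hx => by
          rw [fderivWithin_of_isOpen Metric.isOpen_ball hx, (hder x hx).hasFDerivAt.fderiv]
          simp) ht (Metric.mem_ball_self hε)
    filter_upwards [Metric.ball_mem_nhds t0 hε] with t ht
    have := φ.injOn (hB t ht) (hB t0 (Metric.mem_ball_self hε)) (hc t ht)
    exact mul_left_cancel this
  exact this.apply_eq_of_isPreconnected isPreconnected_univ (Set.mem_univ _) (Set.mem_univ _)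

theorem LD_unique [IsTopologicalGroup G] {g h : ℝ → G} {ξ : ℝ → E} (hg : ∀ t, LD g t (ξ t))
    (hh : ∀ t, LD h t (ξ t)) {t0 : ℝ} (h0 : g t0 = h t0) : g = h := by
  have key : ∀ t, LD (fun s => g s * (h s)⁻¹) t (0 : E) := by
    intro t
    have := (hg t).mul (hh t).inv
    simpa using this
  ext t
  have := LD_zero_const key t t0
  simp only [h0, mul_inv_cancel] at this
  exact mul_inv_eq_one.1 this

end Basic



section Coord

universe u uG uL
variable {E : Type u} [NormedAddCommGroup E] [NormedSpace ℝ E] [FiniteDimensional ℝ E]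
  {G : Type uG} [TopologicalSpace G] [Group G] [ChartedSpace E G]
  [LieGroup 𝓘(ℝ, E) (⊤ : ℕ∞) G] [IsTopologicalGroup G]
  {L : Type uL} [LieRing L] [LieAlgebra ℝ L] [FiniteDimensional ℝ L]

theorem Ad_deriv (eq : L ≃ₗ[ℝ] E)
    (hbracket : ∀ (v w : L) (ψ : ℝ → G), IsOneParamSubgroup ψ (eq v) →
      HasDerivAt (fun t : ℝ => AdMap (ψ t) (eq w)) (eq ⁅v, w⁆) 0)
    {ψ : ℝ → G} {X : L} (hψ : IsOneParamSubgroup ψ (eq X)) (w : E) (t : ℝ) :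
    HasDerivAt (fun t : ℝ => AdL (ψ t) w) (eq ⁅X, eq.symm (AdL (ψ t) w)⁆) t := by
  have h := hbracket X (eq.symm (AdL (ψ t) w)) ψ hψ
  simp only [LinearEquiv.apply_symm_apply, ← AdL_apply] at h
  have h0 : (fun s : ℝ => s - t) t = 0 := by simp
  have hs : HasDerivAt (fun s : ℝ => s - t) 1 t := (hasDerivAt_id t).sub_const t
  rw [← h0] at h
  have := HasDerivAt.scomp (h := fun s : ℝ => s - t) t h hs
  rw [one_smul] at this
  convert this using 1
  ext s
  simp only [Function.comp]
  rw [← AdL_mul, ← hψ.2.1, sub_add_cancel]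

theorem exists_exp {𝔸 : Type*} [NormedRing 𝔸] [NormedAlgebra ℝ 𝔸] [CompleteSpace 𝔸] (a : 𝔸) :
    ∃ M : ℝ → 𝔸, (∀ t, HasDerivAt M (a * M t) t) ∧ M 0 = 1 :=
  ⟨fun t => NormedSpace.exp (t • a), fun t => hasDerivAt_exp_smul_const' (𝕂 := ℝ) a t, by simp⟩

theorem Ad_mem (eq : L ≃ₗ[ℝ] E)
    (hbracket : ∀ (v w : L) (ψ : ℝ → G), IsOneParamSubgroup ψ (eq v) →
      HasDerivAt (fun t : ℝ => AdMap (ψ t) (eq w)) (eq ⁅v, w⁆) 0)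
    {ψ : ℝ → G} {X : L} (hψ : IsOneParamSubgroup ψ (eq X)) (V : Submodule ℝ E)
    (hV : ∀ y ∈ V, eq ⁅X, eq.symm y⁆ ∈ V) (w : E) (hw : w ∈ V) (t : ℝ) :
    AdL (ψ t) w ∈ V := by
  let A : E →ₗ[ℝ] E := eq.toLinearMap ∘ₗ (LieAlgebra.ad ℝ L X).comp eq.symm.toLinearMap
  have hA : ∀ y, A y = eq ⁅X, eq.symm y⁆ := fun y => rfl
  let AE : E →L[ℝ] E := A.toContinuousLinearMap
  let AV : V →L[ℝ] V := (A.restrict (p := V) (q := V) hV).toContinuousLinearMap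
  have hAV : ∀ y : V, ((AV y : V) : E) = AE y := fun y => rfl
  obtain ⟨M, hM, hM0⟩ := exists_exp AV
  let f : ℝ → E := fun t => ((M t ⟨w, hw⟩ : V) : E)
  have hf : ∀ t, HasDerivAt f (AE (f t)) t := by
    intro t
    have h1 := hM t
    have h2 := h1.clm_apply (hasDerivAt_const t (⟨w, hw⟩ : V))
    have h3 := V.subtypeL.hasFDerivAt.comp_hasDerivAt t h2
    rw [map_zero, add_zero] at h3
    exact h3
  have hu : ∀ t, HasDerivAt (fun t => AdL (ψ t) w) (AE (AdL (ψ t) w)) t :=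
    fun t => Ad_deriv eq hbracket hψ w t
  have key : (fun t => AdL (ψ t) w) = f := by
    refine ODE_solution_unique_univ (v := fun _ y => AE y) (s := fun _ => Set.univ)
      (K := ‖AE‖₊) (t₀ := 0) (fun t => ?_) (fun t => ⟨hu t, trivial⟩)
      (fun t => ⟨hf t, trivial⟩) ?_
    · exact (AE.lipschitz).lipschitzOnWith
    · simp [f, hM0, hψ.1, AdL_one]
  rw [show AdL (ψ t) w = f t from congrFun key t]
  exact Subtype.coe_prop _

/-- Global coordinates (of the second kind) on the integral manifold through `1` of the
left invariant distribution `V`. -/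
structure IsCoord (V : Submodule ℝ E) {R : Type} [NormedAddCommGroup R] [NormedSpace ℝ R]
    (Φ : R → G) : Prop where
  zero : Φ 0 = 1
  smooth : ContMDiff 𝓘(ℝ, R) 𝓘(ℝ, E) (⊤ : ℕ∞) Φ
  ld : ∀ (x : ℝ → R) (v : R) (t : ℝ), HasDerivAt x v t →
    ∃ ξ ∈ V, LD (fun s => Φ (x s)) t ξ ∧ (ξ = 0 → v = 0)
  lift : ∀ ξ : ℝ → E, Continuous ξ → (∀ t, ξ t ∈ V) → ∀ (t0 : ℝ) (r0 : R),
    ∃ x : ℝ → R, Continuous x ∧ x t0 = r0 ∧ ∀ t, LD (fun s => Φ (x s)) t (ξ t)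
  finrank : Module.finrank ℝ R = Module.finrank ℝ V

theorem finrank_sup_span {V : Submodule ℝ E} {X : E} (hX : X ∉ V) :
    Module.finrank ℝ ↥(V ⊔ Submodule.span ℝ {X}) = Module.finrank ℝ V + 1 := by
  have hX0 : X ≠ 0 := by rintro rfl; exact hX V.zero_mem
  have h := Submodule.finrank_sup_add_finrank_inf_eq V (Submodule.span ℝ {X})
  have h2 : V ⊓ Submodule.span ℝ {X} = ⊥ := by
    rw [← disjoint_iff]
    exact (Submodule.disjoint_span_singleton' hX0).2 hX
  rw [h2, finrank_bot, finrank_span_singleton hX0] at h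
  simpa using h

theorem exists_functional {V : Submodule ℝ E} {X : E} (hX : X ∉ V) :
    ∃ l : E →L[ℝ] ℝ, l X = 1 ∧ ∀ v ∈ V, l v = 0 := by
  obtain ⟨f, hf, hV⟩ := Submodule.exists_le_ker_of_notMem hX
  refine ⟨LinearMap.toContinuousLinearMap ((f X)⁻¹ • f), ?_, ?_⟩
  · simp [hf]
  · intro v hv
    have : f v = 0 := hV hv
    simp [this]

theorem IsCoord.step {V : Submodule ℝ E} {R : Type} [NormedAddCommGroup R] [NormedSpace ℝ R]
    [FiniteDimensional ℝ R]
    {Φ : R → G} (h : IsCoord V Φ) {X : E} (hX : X ∉ V) {ψ : ℝ → G} (hψ : IsOneParamSubgroup ψ X)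
    (hAd : ∀ t, ∀ v ∈ V, AdL (ψ t) v ∈ V) (hc : ∀ w : E, Continuous fun t => AdL (ψ t) w) :
    IsCoord (V ⊔ Submodule.span ℝ {X}) (fun p : R × ℝ => Φ p.1 * ψ p.2) := by
  obtain ⟨l, hlX, hlV⟩ := exists_functional hX
  constructor
  · simp [h.zero, hψ.1]
  · exact (h.smooth.comp contDiff_fst.contMDiff).mul (hψ.2.2.1.comp contDiff_snd.contMDiff)
  · intro x v t hx
    have h1 : HasDerivAt (fun s => (x s).1) v.1 t := hx.fst
    have h2 : HasDerivAt (fun s => (x s).2) v.2 t := hx.snd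
    obtain ⟨ξ, hξ, hld, hinj⟩ := h.ld _ _ _ h1
    have hmem : AdL (ψ (x t).2)⁻¹ ξ ∈ V := by rw [one_neg hψ]; exact hAd _ _ hξ
    refine ⟨_, ?_, hld.mul (one_LD hψ h2), ?_⟩
    · exact Submodule.add_mem_sup hmem
        (Submodule.smul_mem _ _ (Submodule.mem_span_singleton_self X))
    · intro h0
      have e2 : v.2 = 0 := by
        have := congrArg l h0
        simpa [hlX, hlV _ hmem] using this
      have e1 : v.1 = 0 := by
        apply hinj
        rw [e2, zero_smul, add_zero] at h0
        have := congrArg (AdL (ψ (x t).2)) h0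
        rwa [AdL_AdL_inv, map_zero] at this
      exact Prod.ext e1 e2
  · intro ξ hξ hmem t0 r0
    have hlc : Continuous fun t => l (ξ t) := l.continuous.comp hξ
    set s : ℝ → ℝ := fun t => r0.2 + ∫ u in t0..t, l (ξ u) with hs
    have hsd : ∀ t, HasDerivAt s (l (ξ t)) t := fun t =>
      (hlc.integral_hasStrictDerivAt t0 t).hasDerivAt.const_add _
    have hsc : Continuous s := continuous_iff_continuousAt.2 fun t => (hsd t).continuousAt
    have hAc : Continuous fun t => (AdL (ψ t) : E →L[ℝ] E) := continuous_clm_apply.2 hc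
    have hηV : ∀ t, ξ t - l (ξ t) • X ∈ V := by
      intro t
      obtain ⟨v, hv, y, hy, e⟩ := Submodule.mem_sup.1 (hmem t)
      obtain ⟨c, rfl⟩ := Submodule.mem_span_singleton.1 hy
      rw [← e]
      simpa [hlX, hlV _ hv] using hv
    obtain ⟨x, hx, hx0, hxl⟩ := h.lift (fun t => AdL (ψ (s t)) (ξ t - l (ξ t) • X))
      ((hAc.comp hsc).clm_apply (hξ.sub (hlc.smul continuous_const)))
      (fun t => hAd _ _ (hηV t)) t0 r0.1
    refine ⟨fun t => (x t, s t), hx.prodMk hsc, ?_, ?_⟩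
    · ext <;> simp [hx0, hs]
    · intro t
      have := (hxl t).mul (one_LD hψ (hsd t))
      rw [AdL_inv_AdL, sub_add_cancel] at this
      exact this
  · rw [finrank_sup_span hX, ← h.finrank]
    simp


theorem isCoord_bot {R : Type} [NormedAddCommGroup R] [NormedSpace ℝ R] [Subsingleton R] :
    IsCoord (⊥ : Submodule ℝ E) (fun _ : R => (1 : G)) where
  zero := rfl
  smooth := contMDiff_const
  ld := fun x v t _ => ⟨0, by simp, LD.const 1 t, fun _ => Subsingleton.elim _ _⟩
  lift := fun ξ _ h t0 r0 => ⟨fun _ => r0, continuous_const, rfl, fun t => by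
    rw [(Submodule.mem_bot ℝ).1 (h t)]; exact LD.const 1 t⟩
  finrank := by rw [finrank_bot]; exact Module.finrank_zero_of_subsingleton

theorem IsCoord.closure {V : Submodule ℝ E} {R : Type} [NormedAddCommGroup R] [NormedSpace ℝ R]
    {Φ : R → G} (h : IsCoord V Φ) {X : E} (hX : X ∈ V) {ψ : ℝ → G} (hψ : IsOneParamSubgroup ψ X)
    (r : R) (t : ℝ) : ∃ r', Φ r' = Φ r * ψ t := by
  obtain ⟨x, -, hx0, hx⟩ := h.lift (fun _ => X) continuous_const (fun _ => hX) 0 r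
  refine ⟨x t, ?_⟩
  have : (fun s => Φ (x s)) = fun s => Φ r * ψ s := by
    refine LD_unique (t0 := 0) hx (fun t => ?_) (by simp [hx0, hψ.1])
    have := (one_LD hψ (hasDerivAt_id t)).const_mul (Φ r)
    simpa using this
  exact congrFun this t

theorem IsCoord.subgroup_le {V : Submodule ℝ E} {R : Type} [NormedAddCommGroup R]
    [NormedSpace ℝ R] {Φ : R → G} (h : IsCoord V Φ) (eq : L ≃ₗ[ℝ] E) (S : Set L)
    (hS : ∀ x ∈ S, eq x ∈ V) :
    ∀ g ∈ integralSubgroup (G := G) eq S, ∃ r, Φ r = g := by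
  intro g hg
  unfold integralSubgroup at hg
  have key : ∀ g ∈ Subgroup.closure {g : G | ∃ v ∈ S, ∃ ψ : ℝ → G,
      IsOneParamSubgroup ψ (eq v) ∧ ∃ t : ℝ, g = ψ t}, ∃ r, Φ r = g := by
    intro g hg
    induction hg using Subgroup.closure_induction_right with
    | one => exact ⟨0, h.zero⟩
    | mul_right x hx y hy ih =>
      obtain ⟨r, rfl⟩ := ih
      obtain ⟨v, hv, ψ, hψ, t, rfl⟩ := hy
      exact h.closure (hS v hv) hψ r t
    | mul_inv_cancel x hx y hy ih =>
      obtain ⟨r, rfl⟩ := ih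
      obtain ⟨v, hv, ψ, hψ, t, rfl⟩ := hy
      rw [one_neg hψ]
      exact h.closure (hS v hv) hψ r (-t)
  exact key g hg

end Coord


section Homeo

/-- Path lifting from the existence of local sections through every point. -/
theorem path_lift_of_sections {R X : Type*} [TopologicalSpace R] [TopologicalSpace X] {p : R → X}
    (hsec : ∀ g : X, ∃ V : Set X, IsOpen V ∧ g ∈ V ∧ ∀ r, p r ∈ V →
      ∃ sg : X → R, ContinuousOn sg V ∧ (∀ y ∈ V, p (sg y) = y) ∧ sg (p r) = r)
    (γ : C(unitInterval, X)) (e : R) (γ_0 : γ 0 = p e) : ∃ Γ : C(unitInterval, R), p ∘ Γ = γ ∧ Γ 0 = e := by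
  choose U U_open mem_base hU using hsec
  obtain ⟨t, t_0, t_mono, ⟨n_max, h_max⟩, t_sub⟩ :=
    exists_monotone_Icc_subset_open_cover_unitInterval
    (fun x ↦ (U_open x).preimage γ.continuous) fun t _ ↦ Set.mem_iUnion.2 ⟨γ t, mem_base _⟩
  suffices ∀ n, ∃ Γ : unitInterval → R, ContinuousOn Γ (Set.Icc 0 (t n)) ∧
      (Set.Icc 0 (t n)).EqOn (p ∘ Γ) γ ∧ Γ 0 = e by
    obtain ⟨Γ, cont, eqOn, Γ_0⟩ := this n_max
    rw [h_max _ le_rfl] at cont eqOn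
    exact ⟨⟨Γ, continuousOn_univ.mp
      (by convert! cont; rw [eq_comm, Set.eq_univ_iff_forall]; exact fun t ↦ ⟨bot_le, le_top⟩)⟩,
      funext fun _ ↦ eqOn ⟨bot_le, le_top⟩, Γ_0⟩
  intro n
  induction n with
  | zero =>
    refine ⟨fun _ ↦ e, continuous_const.continuousOn, fun t ht ↦ ?_, rfl⟩
    rw [t_0, Set.Icc_self, Set.mem_singleton_iff] at ht; subst ht; exact γ_0.symm
  | succ n ih => ?_
  obtain ⟨Γ, cont, eqOn, Γ_0⟩ := ih
  obtain ⟨x, t_sub⟩ := t_sub n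
  have pΓtn : p (Γ (t n)) = γ (t n) := eqOn ⟨t_0 ▸ t_mono n.zero_le, le_rfl⟩
  obtain ⟨sg, hsgc, hsgp, hsg⟩ := hU x (Γ (t n)) (pΓtn ▸ t_sub ⟨le_rfl, t_mono n.le_succ⟩)
  refine ⟨fun s ↦ if s ≤ t n then Γ s else sg (γ s),
    .if (fun s hs ↦ ?_) (cont.mono fun _ h ↦ ?_) ?_, fun s hs ↦ ?_, ?_⟩
  · cases frontier_Iic_subset _ hs.2
    rw [← pΓtn, hsg]
  · rw [closure_le_eq continuous_id' continuous_const] at h; exact ⟨h.1.1, h.2⟩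
  · apply hsgc.comp γ.2.continuousOn
    simp_rw [not_le]; intro s h
    exact t_sub ⟨closure_lt_subset_le continuous_const continuous_subtype_val h.2, h.1.2⟩
  · rw [Function.comp_apply]; split_ifs with h
    exacts [eqOn ⟨hs.1, h⟩, hsgp _ (t_sub ⟨le_of_not_ge h, hs.2⟩)]
  · dsimp only; rwa [if_pos (t_0 ▸ t_mono n.zero_le)]

theorem homeo_of_sections {R X : Type*} [TopologicalSpace R] [TopologicalSpace X] [T2Space R]
    [PreconnectedSpace R]
    [SimplyConnectedSpace X] [LocallyPathConnectedSpace X] {p : R → X}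
    (homeo : IsLocalHomeomorph p)
    (hsec : ∀ g : X, ∃ V : Set X, IsOpen V ∧ g ∈ V ∧ ∀ r, p r ∈ V →
      ∃ sg : X → R, ContinuousOn sg V ∧ (∀ y ∈ V, p (sg y) = y) ∧ sg (p r) = r) (e₀ : R) :
    ∃ e : R ≃ₜ X, ⇑e = p := by
  have sep : IsSeparatedMap p := T2Space.isSeparatedMap p
  have lift := path_lift_of_sections hsec
  obtain ⟨F, ⟨hF0, hF⟩, -⟩ := homeo.existsUnique_continuousMap_lifts (ContinuousMap.id X)
    (p e₀) e₀ rfl (fun γ γ_0 => by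
      obtain ⟨Γ, h1, h2⟩ := lift γ e₀ γ_0
      exact ⟨Γ, h2, by rw [h1]; rfl⟩) (by
      intro γ γ' Γ Γ' γ_0 γ'_0 Γ_0 Γ'_0 hΓ hΓ' h1
      let pγ : Path (p e₀) (γ 1) := ⟨γ, γ_0, rfl⟩
      let pγ' : Path (p e₀) (γ 1) := ⟨γ', γ'_0, h1.symm⟩
      obtain ⟨H⟩ := SimplyConnectedSpace.paths_homotopic pγ pγ'
      have hH0 : ∀ t, H (t, 0) = p e₀ := fun t => by simp
      let c : unitInterval → C(unitInterval, X) := fun t => ⟨fun s => H (t, s), by fun_prop⟩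
      choose Λ hΛ hΛ0 using fun t => lift (c t) e₀ (hH0 t)
      have hm := homeo.monodromy_theorem sep H Λ
        (fun t s => congrFun (hΛ t) s) (fun t => by rw [hΛ0, hΛ0]) 1
      have u : ∀ A B : C(unitInterval, R), A 0 = e₀ → B 0 = e₀ → p ∘ A = p ∘ B → A = B := by
        intro A B hA hB hAB
        exact DFunLike.coe_injective (sep.eq_of_comp_eq homeo.isLocallyInjective A.2 B.2 hAB 0
          (by rw [hA, hB]))
      have e0 : Λ 0 = Γ := by
        refine u _ _ (hΛ0 0) Γ_0 ?_
        rw [hΛ 0, hΓ]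
        ext s
        exact H.apply_zero s
      have e1 : Λ 1 = Γ' := by
        refine u _ _ (hΛ0 1) Γ'_0 ?_
        rw [hΛ 1, hΓ']
        ext s
        exact H.apply_one s
      rw [← e0, ← e1, hm])
  have hFp : (F : X → R) ∘ p = id := by
    refine sep.eq_of_comp_eq homeo.isLocallyInjective (F.continuous.comp homeo.continuous)
      continuous_id ?_ e₀ ?_
    · rw [← Function.comp_assoc, hF]; rfl
    · simp [hF0]
  exact ⟨{ toFun := p, invFun := F, left_inv := fun r => congrFun hFp r,
           right_inv := fun x => congrFun hF x,
           continuous_toFun := homeo.continuous, continuous_invFun := F.continuous }, rfl⟩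

universe u uG
variable {E : Type u} [NormedAddCommGroup E] [NormedSpace ℝ E] [FiniteDimensional ℝ E]
  {G : Type uG} [TopologicalSpace G] [Group G] [ChartedSpace E G]
  [LieGroup 𝓘(ℝ, E) (⊤ : ℕ∞) G] [IsTopologicalGroup G]

theorem contMDiffAt_chart_one {g : G} (hg : g ∈ (chartAt E (1 : G)).source) :
    ContMDiffAt 𝓘(ℝ, E) 𝓘(ℝ, E) (⊤ : ℕ∞) (chartAt E (1 : G)) g :=
  (contMDiffOn_chart (I := 𝓘(ℝ, E)) (n := (⊤ : ℕ∞)) (x := (1 : G))).contMDiffAt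
    ((chartAt E (1 : G)).open_source.mem_nhds hg)

/-- The logarithmic derivative of a smooth curve exists and is continuous. -/
theorem exists_LD {γ : ℝ → G} (hγ : ContMDiff 𝓘(ℝ, ℝ) 𝓘(ℝ, E) (⊤ : ℕ∞) γ) :
    ∃ ξ : ℝ → E, Continuous ξ ∧ ∀ t, LD γ t (ξ t) := by
  set K : ℝ × ℝ → E := fun q => chartAt E (1 : G) ((γ q.1)⁻¹ * γ q.2) with hK
  have hKd : ∀ t, ContDiffAt ℝ (⊤ : ℕ∞) K (t, t) := by
    intro t
    rw [← contMDiffAt_iff_contDiffAt]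
    have h1 : ContMDiffAt 𝓘(ℝ, ℝ × ℝ) 𝓘(ℝ, E) (⊤ : ℕ∞)
        (fun q : ℝ × ℝ => (γ q.1)⁻¹ * γ q.2) (t, t) :=
      ((hγ.comp contDiff_fst.contMDiff).inv.mul (hγ.comp contDiff_snd.contMDiff)).contMDiffAt
    refine ContMDiffAt.comp (t, t) (contMDiffAt_chart_one ?_) h1
    simp
  refine ⟨fun t => fderiv ℝ K (t, t) (0, 1), ?_, ?_⟩
  · rw [continuous_iff_continuousAt]
    intro t
    have h1 := (hKd t).continuousAt_fderiv ne_zero'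
    have h2 : ContinuousAt (fun t : ℝ => fderiv ℝ K (t, t)) t :=
      ContinuousAt.comp (f := fun t : ℝ => (t, t)) h1 (by fun_prop)
    exact h2.clm_apply continuousAt_const
  · intro t
    unfold LD
    rw [D_iff]
    refine ⟨by simp, (hγ.continuous.const_mul _).continuousAt, ?_⟩
    have h1 : HasFDerivAt K (fderiv ℝ K (t, t)) (t, t) :=
      ((hKd t).differentiableAt ne_zero').hasFDerivAt
    have h2 : HasDerivAt (fun s : ℝ => (t, s)) ((0 : ℝ), (1 : ℝ)) t :=
      (hasDerivAt_const t t).prodMk (hasDerivAt_id t)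
    exact HasFDerivAt.comp_hasDerivAt (f := fun s : ℝ => (t, s)) t h1 h2

variable {R : Type} [NormedAddCommGroup R] [NormedSpace ℝ R] [FiniteDimensional ℝ R] {Φ : R → G}

theorem IsCoord.isLocalHomeomorph (h : IsCoord (⊤ : Submodule ℝ E) Φ) : IsLocalHomeomorph Φ := by
  apply IsLocalHomeomorph.mk
  intro r
  set φ := chartAt E (1 : G) with hφ
  set F : R → E := fun y => φ ((Φ r)⁻¹ * Φ y) with hF
  have hFd : ContDiffAt ℝ (⊤ : ℕ∞) F r := by
    rw [← contMDiffAt_iff_contDiffAt]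
    have h1 : ContMDiffAt 𝓘(ℝ, R) 𝓘(ℝ, E) (⊤ : ℕ∞) (fun y => (Φ r)⁻¹ * Φ y) r :=
      (contMDiff_const.mul h.smooth).contMDiffAt
    refine ContMDiffAt.comp r (contMDiffAt_chart_one ?_) h1
    simp
  have hs := hFd.hasStrictFDerivAt ne_zero'
  have hinj : Function.Injective (fderiv ℝ F r : R →ₗ[ℝ] E) := by
    rw [← LinearMap.ker_eq_bot, LinearMap.ker_eq_bot']
    intro v hv
    have hx : HasDerivAt (fun s : ℝ => r + s • v) v 0 := by
      simpa using ((hasDerivAt_id (0 : ℝ)).smul_const v).const_add r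
    obtain ⟨ξ, -, hld, h0⟩ := h.ld _ _ _ hx
    apply h0
    have h1 := (D_iff.1 hld).2.2
    simp only [zero_smul, add_zero] at h1
    have h2 : HasDerivAt (fun s : ℝ => F (r + s • v)) (fderiv ℝ F r v) 0 := by
      have h3 : HasFDerivAt F (fderiv ℝ F r) (r + (0 : ℝ) • v) := by
        simpa using hs.hasFDerivAt
      exact HasFDerivAt.comp_hasDerivAt (f := fun s : ℝ => r + s • v) 0 h3 hx
    have h4 := h1.unique h2
    rw [h4]
    exact hv
  have hdim : Module.finrank ℝ R = Module.finrank ℝ E := by rw [h.finrank, finrank_top]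
  let A : R ≃L[ℝ] E :=
    (LinearMap.linearEquivOfInjective (fderiv ℝ F r : R →ₗ[ℝ] E) hinj hdim).toContinuousLinearEquiv
  have hA : (A : R →L[ℝ] E) = fderiv ℝ F r := by
    ext v
    rfl
  rw [← hA] at hs
  let e1 := hs.toOpenPartialHomeomorph F
  have ho : IsOpen ((fun y => (Φ r)⁻¹ * Φ y) ⁻¹' φ.source) :=
    φ.open_source.preimage (h.smooth.continuous.const_mul _)
  have he1 : (e1 : R → E) = F := rfl
  let e2 := e1.restrOpen _ ho
  have he2 : (e2 : R → E) = F := rfl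
  let e3 := (e2.trans φ.symm).trans (Homeomorph.mulLeft (Φ r)).toOpenPartialHomeomorph
  refine ⟨e3, ?_, ?_⟩
  · simp only [e3, OpenPartialHomeomorph.trans_source, he2, e2,
      OpenPartialHomeomorph.restrOpen_source]
    refine ⟨⟨⟨hs.mem_toOpenPartialHomeomorph_source, ?_⟩, ?_⟩, trivial⟩
    · simp [φ]
    · change F r ∈ φ.target
      simp [F, φ]
  · intro y hy
    simp only [e3, OpenPartialHomeomorph.trans_source, he2, e2,
      OpenPartialHomeomorph.restrOpen_source] at hy
    have hy2 : (Φ r)⁻¹ * Φ y ∈ φ.source := hy.1.1.2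
    change Φ y = Φ r * φ.symm (φ ((Φ r)⁻¹ * Φ y))
    rw [φ.left_inv hy2]
    simp

theorem IsCoord.sections (h : IsCoord (⊤ : Submodule ℝ E) Φ) (g : G) :
    ∃ V : Set G, IsOpen V ∧ g ∈ V ∧ ∀ r, Φ r ∈ V →
      ∃ sg : G → R, ContinuousOn sg V ∧ (∀ y ∈ V, Φ (sg y) = y) ∧ sg (Φ r) = r := by
  set φ := chartAt E (1 : G) with hφ
  have h1s : (1 : G) ∈ φ.source := mem_chart_source E 1
  obtain ⟨ε, hε, hB⟩ := Metric.isOpen_iff.1 φ.open_target (φ 1) (φ.map_source h1s)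
  set B := Metric.ball (φ 1) ε with hBdef
  set U : Set G := φ.source ∩ φ ⁻¹' B with hU
  have hUo : IsOpen U := φ.isOpen_inter_preimage Metric.isOpen_ball
  set V : Set G := (fun y => g⁻¹ * y) ⁻¹' U with hV
  have hVo : IsOpen V := hUo.preimage (continuous_const_mul _)
  refine ⟨V, hVo, by simp [hV, hU, h1s, hBdef, hε], ?_⟩
  intro r hr
  -- path family
  set z : G → E := fun y => φ (g⁻¹ * y) with hz
  have hzc : ContinuousOn z V :=
    φ.continuousOn.comp (continuous_const_mul _).continuousOn (fun y hy => hy.1)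
  let c : G → ℝ → E := fun y t => z (Φ r) + Real.smoothTransition t • (z y - z (Φ r))
  have hcB : ∀ y ∈ V, ∀ t, c y t ∈ B := by
    intro y hy t
    have := (convex_ball (φ 1) ε).add_smul_sub_mem hr.2 hy.2
      (t := Real.smoothTransition t) ⟨Real.smoothTransition.nonneg t, Real.smoothTransition.le_one t⟩
    exact this
  let γ : G → ℝ → G := fun y t => g * φ.symm (c y t)
  have hγ : ∀ y ∈ V, ContMDiff 𝓘(ℝ, ℝ) 𝓘(ℝ, E) (⊤ : ℕ∞) (γ y) := by
    intro y hy
    have hc : ContDiff ℝ (⊤ : ℕ∞) (c y) :=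
      contDiff_const.add (Real.smoothTransition.contDiff.smul contDiff_const)
    have h1 : ContMDiff 𝓘(ℝ, ℝ) 𝓘(ℝ, E) (⊤ : ℕ∞) (fun t => φ.symm (c y t)) := by
      intro t
      have hs : ContMDiffAt 𝓘(ℝ, E) 𝓘(ℝ, E) (⊤ : ℕ∞) φ.symm (c y t) :=
        (contMDiffOn_chart_symm (I := 𝓘(ℝ, E)) (n := (⊤ : ℕ∞)) (x := (1 : G))).contMDiffAt
          (φ.open_target.mem_nhds (hB (hcB y hy t)))
      exact ContMDiffAt.comp t hs hc.contMDiff.contMDiffAt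
    exact contMDiff_const.mul h1
  have hγ0 : ∀ y, γ y 0 = Φ r := by
    intro y
    simp only [γ, c, Real.smoothTransition.zero, zero_smul, add_zero, z]
    rw [φ.left_inv hr.1]; simp
  have hγ1 : ∀ y ∈ V, γ y 1 = y := by
    intro y hy
    simp only [γ, c, Real.smoothTransition.one, one_smul, add_sub_cancel, z]
    rw [φ.left_inv hy.1]; simp
  have hlift : ∀ y : V, ∃ x : ℝ → R, Continuous x ∧ x 0 = r ∧ ∀ t, Φ (x t) = γ y t := by
    intro y
    obtain ⟨ξ, hξc, hξ⟩ := exists_LD (hγ y y.2)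
    obtain ⟨x, hx, hx0, hxl⟩ := h.lift ξ hξc (fun _ => trivial) 0 r
    refine ⟨x, hx, hx0, fun t => ?_⟩
    have := LD_unique (t0 := 0) hxl hξ (by simp [hx0, hγ0])
    exact congrFun this t
  choose x hxc hx0 hxγ using hlift
  have hfc : Continuous fun p : unitInterval × V => γ p.2 p.1 := by
    have hz2 : Continuous fun y : V => z y := hzc.domRestrict
    have h1 : Continuous fun p : unitInterval × V => c p.2 p.1 := by
      have h3 : Continuous fun p : unitInterval × V => Real.smoothTransition (p.1 : ℝ) :=
        Real.smoothTransition.continuous.comp (by fun_prop)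
      exact continuous_const.add (h3.smul ((hz2.comp continuous_snd).sub continuous_const))
    have h2 : Continuous fun p : unitInterval × V => φ.symm (c p.2 p.1) :=
      φ.continuousOn_symm.comp_continuous h1 (fun p => hB (hcB _ p.2.2 _))
    exact h2.const_mul g
  have hcont := h.isLocalHomeomorph.continuous_lift (T2Space.isSeparatedMap Φ)
    (⟨_, hfc⟩ : C(unitInterval × V, G)) (g := fun p => x p.2 p.1)
    (by ext p; exact hxγ p.2 p.1) (by simpa [hx0] using continuous_const)
    (fun a => (hxc a).comp continuous_subtype_val)
  have hend : Continuous fun y : V => x y 1 :=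
    hcont.comp (f := fun y : V => ((1 : unitInterval), y)) (by fun_prop)
  classical
  refine ⟨fun y => if hy : y ∈ V then x ⟨y, hy⟩ 1 else r, ?_, ?_, ?_⟩
  · rw [continuousOn_iff_continuous_domRestrict]
    convert hend using 1
    ext y
    simp [Set.domRestrict]
  · intro y hy
    simp only [hy, dif_pos]
    rw [hxγ]
    exact hγ1 y hy
  · simp only [hr, dif_pos]
    have hzero : ∀ t, LD (fun s => Φ (x ⟨Φ r, hr⟩ s)) t (0 : E) := by
      intro t
      have : (fun s => Φ (x ⟨Φ r, hr⟩ s)) = fun _ => Φ r := by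
        ext s
        rw [hxγ]
        simp only [γ, c, sub_self, smul_zero, add_zero, z]
        rw [φ.left_inv hr.1]; simp
      rw [this]
      exact LD.const _ _
    have hconst : x ⟨Φ r, hr⟩ = fun _ => r := by
      refine (T2Space.isSeparatedMap Φ).eq_of_comp_eq h.isLocalHomeomorph.isLocallyInjective
        (hxc _) continuous_const ?_ 0 (hx0 _)
      ext s
      change Φ (x ⟨Φ r, hr⟩ s) = Φ r
      rw [hxγ]
      simp only [γ, c, sub_self, smul_zero, add_zero, z]
      rw [φ.left_inv hr.1]; simp
    rw [hconst]

theorem IsCoord.homeo [SimplyConnectedSpace G] (h : IsCoord (⊤ : Submodule ℝ E) Φ) :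
    ∃ e : R ≃ₜ G, ⇑e = Φ := by
  have : LocallyPathConnectedSpace G := ChartedSpace.locallyPathConnectedSpace E G
  exact homeo_of_sections h.isLocalHomeomorph h.sections 0

end Homeo


section Final

universe u uG uL

theorem chain_induction {L : Type*} [AddCommGroup L] [Module ℝ L] [FiniteDimensional ℝ L]
    (P : Submodule ℝ L → Prop) {A B : Submodule ℝ L} (hAB : A ≤ B) (hA : P A)
    (hstep : ∀ V, A ≤ V → V < B → P V → ∃ V', V < V' ∧ V' ≤ B ∧ P V') : P B := by
  obtain ⟨V, ⟨h1, h2, h3⟩, hmax⟩ := (wellFounded_gt (α := Submodule ℝ L)).has_min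
    {V | A ≤ V ∧ V ≤ B ∧ P V} ⟨A, le_rfl, hAB, hA⟩
  rcases h2.eq_or_lt with rfl | hlt
  · exact h3
  · obtain ⟨V', h4, h5, h6⟩ := hstep V h1 hlt h3
    exact absurd h4 (hmax V' ⟨h1.trans h4.le, h5, h6⟩)

theorem lt_sup_span {L : Type*} [AddCommGroup L] [Module ℝ L] {V : Submodule ℝ L} {X : L}
    (hX : X ∉ V) : V < V ⊔ Submodule.span ℝ {X} := by
  refine lt_of_le_of_ne le_sup_left fun h => hX ?_
  rw [h]
  exact Submodule.mem_sup_right (Submodule.mem_span_singleton_self X)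

theorem cartan_sup {L : Type*} [LieRing L] [LieAlgebra ℝ L] [FiniteDimensional ℝ L]
    (H : LieSubalgebra ℝ L) (hH : H.IsCartanSubalgebra) :
    H.toSubmodule ⊔ (LieAlgebra.derivedSeries ℝ L 1).toSubmodule = ⊤ := by
  have h1 := LieModule.isCompl_genWeightSpace_zero_posFittingComp ℝ H L
  have h2 : LieModule.genWeightSpace L (0 : H → ℝ) = H.toLieSubmodule :=
    LieAlgebra.rootSpace_zero_eq ℝ L H
  have h3 : (LieModule.posFittingComp ℝ H L).toSubmodule ≤
      (LieAlgebra.derivedSeries ℝ L 1).toSubmodule := by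
    have h4 : LieModule.posFittingComp ℝ H L ≤ LieModule.lowerCentralSeries ℝ H L 1 :=
      (LieModule.posFittingComp_le_iInf_lowerCentralSeries ℝ H L).trans (iInf_le _ 1)
    intro x hx
    have hx' : x ∈ (LieModule.lowerCentralSeries ℝ H L 1).toSubmodule := h4 hx
    rw [LieModule.lowerCentralSeries_succ, LieSubmodule.lieIdeal_oper_eq_linear_span'] at hx'
    refine (Submodule.span_le (p := (LieAlgebra.derivedSeries ℝ L 1).toSubmodule)).2 ?_ hx'
    rintro _ ⟨a, -, b, -, rfl⟩
    change ⁅(a : L), b⁆ ∈ LieAlgebra.derivedSeries ℝ L 1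
    rw [LieAlgebra.derivedSeries_def, LieAlgebra.derivedSeriesOfIdeal_succ]
    exact LieSubmodule.lie_mem_lie trivial trivial
  have h5 := h1.sup_eq_top
  rw [h2] at h5
  have h6 := congrArg LieSubmodule.toSubmodule h5
  rw [LieSubmodule.sup_toSubmodule, LieSubmodule.top_toSubmodule] at h6
  rw [eq_top_iff, ← h6]
  exact sup_le_sup le_rfl h3

variable {E : Type u} [NormedAddCommGroup E] [NormedSpace ℝ E] [FiniteDimensional ℝ E]
  {G : Type uG} [TopologicalSpace G] [Group G] [ChartedSpace E G]
  [LieGroup 𝓘(ℝ, E) (⊤ : ℕ∞) G] [IsTopologicalGroup G]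
  {L : Type uL} [LieRing L] [LieAlgebra ℝ L] [FiniteDimensional ℝ L]

theorem coordStep (eq : L ≃ₗ[ℝ] E)
    (hbracket : ∀ (v w : L) (ψ : ℝ → G), IsOneParamSubgroup ψ (eq v) →
      HasDerivAt (fun t : ℝ => AdMap (ψ t) (eq w)) (eq ⁅v, w⁆) 0)
    {V : Submodule ℝ L} {R : Type} [NormedAddCommGroup R] [NormedSpace ℝ R]
    [FiniteDimensional ℝ R] {Φ : R → G} (h : IsCoord (V.map eq.toLinearMap) Φ) {X : L}
    (hX : X ∉ V) (hXV : ∀ y ∈ V, ⁅X, y⁆ ∈ V) {ψ : ℝ → G} (hψ : IsOneParamSubgroup ψ (eq X)) :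
    IsCoord ((V ⊔ Submodule.span ℝ {X}).map eq.toLinearMap)
      (fun p : R × ℝ => Φ p.1 * ψ p.2) := by
  have e : (V ⊔ Submodule.span ℝ {X}).map eq.toLinearMap =
      V.map eq.toLinearMap ⊔ Submodule.span ℝ {eq X} := by
    rw [Submodule.map_sup, Submodule.map_span, Set.image_singleton]
    rfl
  rw [e]
  have hmem : ∀ y, eq y ∈ V.map eq.toLinearMap ↔ y ∈ V := by
    intro y
    constructor
    · rintro ⟨z, hz, hzy⟩
      have : z = y := eq.injective hzy
      exact this ▸ hz
    · intro hy; exact ⟨y, hy, rfl⟩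
  refine h.step (by rwa [hmem]) hψ ?_ ?_
  · intro t v hv
    refine Ad_mem eq hbracket hψ _ ?_ v hv t
    rintro _ ⟨y, hy, rfl⟩
    rw [hmem]
    simpa using hXV y hy
  · intro w
    exact continuous_iff_continuousAt.2 fun t => (Ad_deriv eq hbracket hψ w t).continuousAt

/-- Simultaneous coordinates for `V` and `𝔥 ⊓ V`. -/
def Pair (G : Type uG) [TopologicalSpace G] [Group G] [ChartedSpace E G]
    (eq : L ≃ₗ[ℝ] E) (H V : Submodule ℝ L) : Prop :=
  ∃ (R0 R : Type) (_ : NormedAddCommGroup R0) (_ : NormedSpace ℝ R0)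
    (_ : FiniteDimensional ℝ R0) (_ : NormedAddCommGroup R) (_ : NormedSpace ℝ R)
    (_ : FiniteDimensional ℝ R) (Φ : R → G) (i : R0 → R) (q : R → R0),
    Continuous i ∧ Continuous q ∧ (∀ x, q (i x) = x) ∧
    IsCoord (V.map eq.toLinearMap) Φ ∧
    IsCoord ((H ⊓ V).map eq.toLinearMap) (fun x => Φ (i x)) ∧
    ∀ x, Φ (i x) ∈ integralSubgroup (G := G) eq (H : Set L)

theorem Pair.step (eq : L ≃ₗ[ℝ] E)
    (hexp : ∀ v : E, ∃ ψ : ℝ → G, IsOneParamSubgroup ψ v)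
    (hbracket : ∀ (v w : L) (ψ : ℝ → G), IsOneParamSubgroup ψ (eq v) →
      HasDerivAt (fun t : ℝ => AdMap (ψ t) (eq w)) (eq ⁅v, w⁆) 0)
    {H V : Submodule ℝ L} (hH : ∀ x ∈ H, ∀ y ∈ H, ⁅x, y⁆ ∈ H) (h : Pair G eq H V) {Z : L}
    (hZ : Z ∉ V) (hV : ∀ x ∈ V ⊔ Submodule.span ℝ {Z}, ∀ y ∈ V, ⁅x, y⁆ ∈ V) :
    Pair G eq H (V ⊔ Submodule.span ℝ {Z}) := by
  obtain ⟨R0, R, _, _, _, _, _, _, Φ, i, q, hi, hq, hqi, hΦ, hΦi, hmem⟩ := h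
  by_cases hY : ∃ Y ∈ H ⊓ (V ⊔ Submodule.span ℝ {Z}), Y ∉ V
  · obtain ⟨Y, ⟨hYH, hYV⟩, hYn⟩ := hY
    obtain ⟨ψ, hψ⟩ := hexp (eq Y)
    have e1 : V ⊔ Submodule.span ℝ {Z} = V ⊔ Submodule.span ℝ {Y} := by
      apply le_antisymm
      · refine sup_le le_sup_left ?_
        rw [Submodule.span_singleton_le_iff_mem]
        obtain ⟨v, hv, z, hz, e⟩ := Submodule.mem_sup.1 hYV
        obtain ⟨c, rfl⟩ := Submodule.mem_span_singleton.1 hz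
        have hc : c ≠ 0 := by
          rintro rfl
          rw [zero_smul, add_zero] at e
          exact hYn (e ▸ hv)
        have : Z = c⁻¹ • (Y - v) := by
          rw [← e, add_sub_cancel_left, smul_smul, inv_mul_cancel₀ hc, one_smul]
        rw [this]
        exact Submodule.smul_mem _ _ (Submodule.sub_mem _
          (Submodule.mem_sup_right (Submodule.mem_span_singleton_self Y))
          (Submodule.mem_sup_left hv))
      · refine sup_le le_sup_left ?_
        rw [Submodule.span_singleton_le_iff_mem]
        exact hYV
    have e2 : H ⊓ (V ⊔ Submodule.span ℝ {Y}) = (H ⊓ V) ⊔ Submodule.span ℝ {Y} := by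
      have : Submodule.span ℝ {Y} ≤ H := by
        rw [Submodule.span_singleton_le_iff_mem]; exact hYH
      rw [inf_comm, sup_comm, sup_inf_assoc_of_le V this, sup_comm, inf_comm]
    rw [e1]
    refine ⟨R0 × ℝ, R × ℝ, inferInstance, inferInstance, inferInstance, inferInstance,
      inferInstance, inferInstance, fun p => Φ p.1 * ψ p.2, fun p => (i p.1, p.2),
      fun p => (q p.1, p.2), by fun_prop, by fun_prop, fun x => by simp [hqi], ?_, ?_, ?_⟩
    · exact coordStep eq hbracket hΦ hYn (hV Y hYV) hψ
    · rw [e2]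
      exact coordStep eq hbracket hΦi (fun hy => hYn hy.2)
        (fun y hy => ⟨hH Y hYH y hy.1, hV Y hYV y hy.2⟩) hψ
    · intro x
      exact mul_mem (hmem x.1) (Subgroup.subset_closure ⟨Y, hYH, ψ, hψ, x.2, rfl⟩)
  · push Not at hY
    obtain ⟨ψ, hψ⟩ := hexp (eq Z)
    have e : H ⊓ (V ⊔ Submodule.span ℝ {Z}) = H ⊓ V :=
      le_antisymm (fun y hy => ⟨hy.1, hY y hy⟩) (inf_le_inf_left _ le_sup_left)
    refine ⟨R0, R × ℝ, inferInstance, inferInstance, inferInstance, inferInstance,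
      inferInstance, inferInstance, fun p => Φ p.1 * ψ p.2, fun p => (i p, 0),
      fun p => q p.1, by fun_prop, by fun_prop, fun x => by simp [hqi], ?_, ?_, ?_⟩
    · exact coordStep eq hbracket hΦ hZ
        (hV Z (Submodule.mem_sup_right (Submodule.mem_span_singleton_self Z))) hψ
    · rw [e]
      simpa only [hψ.1, mul_one] using hΦi
    · intro x
      simpa only [hψ.1, mul_one] using hmem x

theorem Pair.bot (eq : L ≃ₗ[ℝ] E) (H : Submodule ℝ L) : Pair G eq H ⊥ := by
  refine ⟨Fin 0 → ℝ, Fin 0 → ℝ, inferInstance, inferInstance, inferInstance, inferInstance,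
      inferInstance, inferInstance, fun _ => 1, id, id, continuous_id, continuous_id,
      fun _ => rfl, ?_, ?_, fun _ => one_mem _⟩
  · rw [Submodule.map_bot]; exact isCoord_bot
  · rw [inf_bot_eq, Submodule.map_bot]; exact isCoord_bot

theorem Pair.derived (eq : L ≃ₗ[ℝ] E)
    (hexp : ∀ v : E, ∃ ψ : ℝ → G, IsOneParamSubgroup ψ v)
    (hbracket : ∀ (v w : L) (ψ : ℝ → G), IsOneParamSubgroup ψ (eq v) →
      HasDerivAt (fun t : ℝ => AdMap (ψ t) (eq w)) (eq ⁅v, w⁆) 0)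
    {H : Submodule ℝ L} (hH : ∀ x ∈ H, ∀ y ∈ H, ⁅x, y⁆ ∈ H) (k : ℕ)
    (h : Pair G eq H (LieAlgebra.derivedSeries ℝ L (k + 1)).toSubmodule) :
    Pair G eq H (LieAlgebra.derivedSeries ℝ L k).toSubmodule := by
  have hb : ∀ x ∈ LieAlgebra.derivedSeries ℝ L k, ∀ y ∈ LieAlgebra.derivedSeries ℝ L k,
      ⁅x, y⁆ ∈ LieAlgebra.derivedSeries ℝ L (k + 1) := by
    intro x hx y hy
    rw [LieAlgebra.derivedSeries_def, LieAlgebra.derivedSeriesOfIdeal_succ]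
    exact LieSubmodule.lie_mem_lie hx hy
  refine chain_induction (Pair G eq H) ?_ h ?_
  · have : LieAlgebra.derivedSeries ℝ L (k + 1) ≤ LieAlgebra.derivedSeries ℝ L k := by
      rw [LieAlgebra.derivedSeries_def, LieAlgebra.derivedSeries_def]
      exact LieAlgebra.derivedSeriesOfIdeal_antitone _ (Nat.le_succ k)
    exact this
  · intro V h1 h2 hP
    obtain ⟨Z, hZ, hZV⟩ := SetLike.exists_of_lt h2
    have hle : V ⊔ Submodule.span ℝ {Z} ≤ (LieAlgebra.derivedSeries ℝ L k).toSubmodule := by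
      refine sup_le h2.le ?_
      rw [Submodule.span_singleton_le_iff_mem]; exact hZ
    exact ⟨_, lt_sup_span hZV, hle, hP.step eq hexp hbracket hH hZV
      fun x hx y hy => h1 (hb x (hle hx) y (h2.le hy))⟩

theorem Pair.top [LieAlgebra.IsSolvable L] (eq : L ≃ₗ[ℝ] E)
    (hexp : ∀ v : E, ∃ ψ : ℝ → G, IsOneParamSubgroup ψ v)
    (hbracket : ∀ (v w : L) (ψ : ℝ → G), IsOneParamSubgroup ψ (eq v) →
      HasDerivAt (fun t : ℝ => AdMap (ψ t) (eq w)) (eq ⁅v, w⁆) 0)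
    {H : Submodule ℝ L} (hH : ∀ x ∈ H, ∀ y ∈ H, ⁅x, y⁆ ∈ H) : Pair G eq H ⊤ := by
  obtain ⟨k, hk⟩ := LieAlgebra.IsSolvable.solvable ℝ L
  have h0 : Pair G eq H (LieAlgebra.derivedSeries ℝ L k).toSubmodule := by
    rw [hk]; exact Pair.bot eq H
  clear hk
  induction k with
  | zero => exact h0
  | succ k ih => exact ih (Pair.derived eq hexp hbracket hH k h0)

theorem map_top_eq (eq : L ≃ₗ[ℝ] E) : (⊤ : Submodule ℝ L).map eq.toLinearMap = ⊤ := by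
  rw [Submodule.map_top]; exact eq.range

theorem Pair.simplyConnected [SimplyConnectedSpace G] (eq : L ≃ₗ[ℝ] E) {H : Submodule ℝ L}
    (h : Pair G eq H ⊤) :
    SimplyConnectedSpace ↥(integralSubgroup (G := G) eq (H : Set L)) := by
  obtain ⟨R0, R, _, _, _, _, _, _, Φ, i, q, hi, hq, hqi, hΦ, hΦi, hmem⟩ := h
  rw [map_top_eq] at hΦ
  obtain ⟨e, he⟩ := hΦ.homeo
  have hsurj := hΦi.subgroup_le eq (H : Set L)
    (fun x hx => ⟨x, ⟨hx, trivial⟩, rfl⟩)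
  have hes : ∀ x, e.symm (Φ x) = x := fun x => by rw [← he]; simp
  let f : ↥(integralSubgroup (G := G) eq (H : Set L)) ≃ₜ R0 :=
    { toFun := fun w => q (e.symm w)
      invFun := fun x => ⟨Φ (i x), hmem x⟩
      left_inv := by
        rintro ⟨w, hw⟩
        obtain ⟨x, rfl⟩ := hsurj w hw
        simp [hes, hqi]
      right_inv := fun x => by simp [hes, hqi]
      continuous_toFun := hq.comp (e.symm.continuous.comp continuous_subtype_val)
      continuous_invFun := (hΦ.smooth.continuous.comp hi).subtype_mk _ }
  have : ContractibleSpace ↥(integralSubgroup (G := G) eq (H : Set L)) := f.contractibleSpace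
  exact SimplyConnectedSpace.ofContractible _

theorem product [SimplyConnectedSpace G] (eq : L ≃ₗ[ℝ] E)
    (hexp : ∀ v : E, ∃ ψ : ℝ → G, IsOneParamSubgroup ψ v)
    (hbracket : ∀ (v w : L) (ψ : ℝ → G), IsOneParamSubgroup ψ (eq v) →
      HasDerivAt (fun t : ℝ => AdMap (ψ t) (eq w)) (eq ⁅v, w⁆) 0)
    {W N : Submodule ℝ L} (hN : ∀ x y : L, ⁅x, y⁆ ∈ N) (hWN : W ⊔ N = ⊤)
    (h : Pair G eq N ⊤) (g : G) :
    ∃ w ∈ integralSubgroup (G := G) eq (W : Set L),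
      ∃ n ∈ integralSubgroup (G := G) eq (N : Set L), g = w * n := by
  let Q : Submodule ℝ L → Prop := fun V =>
    ∃ (R : Type) (_ : NormedAddCommGroup R) (_ : NormedSpace ℝ R)
    (_ : FiniteDimensional ℝ R) (Φ : R → G), IsCoord (V.map eq.toLinearMap) Φ ∧
    ∀ x, ∃ n ∈ integralSubgroup (G := G) eq (N : Set L),
      ∃ w ∈ integralSubgroup (G := G) eq (W : Set L), Φ x = n * w
  have hQ : Q ⊤ := by
    refine chain_induction Q (A := N) le_top ?_ ?_
    · obtain ⟨R0, R, _, _, _, _, _, _, Φ, i, q, hi, hq, hqi, hΦ, hΦi, hmem⟩ := h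
      rw [inf_top_eq] at hΦi
      exact ⟨R0, inferInstance, inferInstance, inferInstance, _, hΦi, fun x =>
        ⟨_, hmem x, 1, one_mem _, by simp⟩⟩
    · rintro V hNV hlt ⟨R, _, _, _, Φ, hΦ, hmem⟩
      have : ¬ W ≤ V := fun hW => hlt.ne (top_le_iff.1 (hWN ▸ sup_le hW hNV))
      obtain ⟨X, hXW, hXV⟩ := SetLike.not_le_iff_exists.1 this
      obtain ⟨ψ, hψ⟩ := hexp (eq X)
      refine ⟨_, lt_sup_span hXV, le_top, R × ℝ, inferInstance, inferInstance, inferInstance, _,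
        coordStep eq hbracket hΦ hXV (fun y _ => hNV (hN X y)) hψ, ?_⟩
      intro x
      obtain ⟨n, hn, w, hw, e⟩ := hmem x.1
      refine ⟨n, hn, w * ψ x.2,
        mul_mem hw (Subgroup.subset_closure ⟨X, hXW, ψ, hψ, x.2, rfl⟩), ?_⟩
      rw [e, mul_assoc]
  obtain ⟨R, _, _, _, Φ, hΦ, hmem⟩ := hQ
  rw [map_top_eq] at hΦ
  obtain ⟨e, he⟩ := hΦ.homeo
  obtain ⟨r, hr⟩ := e.surjective g⁻¹
  rw [he] at hr
  obtain ⟨n, hn, w, hw, e'⟩ := hmem r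
  refine ⟨w⁻¹, inv_mem hw, n⁻¹, inv_mem hn, ?_⟩
  rw [← mul_inv_rev, ← e', hr, inv_inv]

end Final

end LieAux

/-- Let `G` be a connected, simply connected solvable Lie group whose Lie algebra is
`L` (identified with the tangent space at the identity via `eq`, compatibly with
one-parameter subgroups and the adjoint action).  If `W` is the connected subgroup
corresponding to a Cartan subalgebra `𝔴` of `L` and `N` is the connected subgroup
corresponding to `𝔫 = [L, L]`, then `W` and `N` are simply connected and `G = WN`. -/
theorem cartan_and_derived_subgroups_simply_connected_and_product
    {E : Type*} [NormedAddCommGroup E] [NormedSpace ℝ E] [FiniteDimensional ℝ E]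
    {G : Type*} [TopologicalSpace G] [Group G] [ChartedSpace E G] [LieGroup 𝓘(ℝ, E) (⊤ : ℕ∞) G]
    [IsTopologicalGroup G] [SimplyConnectedSpace G]
    {L : Type*} [LieRing L] [LieAlgebra ℝ L] [FiniteDimensional ℝ L]
    [LieAlgebra.IsSolvable L]
    (eq : L ≃ₗ[ℝ] E)
    (hexp : ∀ v : E, ∃ ψ : ℝ → G, IsOneParamSubgroup ψ v)
    (hbracket : ∀ (v w : L) (ψ : ℝ → G), IsOneParamSubgroup ψ (eq v) →
      HasDerivAt (fun t : ℝ => AdMap (ψ t) (eq w)) (eq ⁅v, w⁆) 0)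
    (𝔴 : LieSubalgebra ℝ L) (h𝔴 : 𝔴.IsCartanSubalgebra) :
    SimplyConnectedSpace ↥(integralSubgroup (G := G) eq (𝔴 : Set L)) ∧
    SimplyConnectedSpace
      ↥(integralSubgroup (G := G) eq ((LieAlgebra.derivedSeries ℝ L 1 : LieIdeal ℝ L) : Set L)) ∧
    ∀ g : G, ∃ w ∈ integralSubgroup (G := G) eq (𝔴 : Set L),
      ∃ n ∈ integralSubgroup (G := G) eq
        ((LieAlgebra.derivedSeries ℝ L 1 : LieIdeal ℝ L) : Set L), g = w * n := by
  have hN : ∀ x y : L, ⁅x, y⁆ ∈ (LieAlgebra.derivedSeries ℝ L 1).toSubmodule := by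
    intro x y
    change ⁅x, y⁆ ∈ LieAlgebra.derivedSeries ℝ L 1
    rw [LieAlgebra.derivedSeries_def, LieAlgebra.derivedSeriesOfIdeal_succ]
    exact LieSubmodule.lie_mem_lie trivial trivial
  have pN := LieAux.Pair.top (G := G) eq hexp hbracket
    (H := (LieAlgebra.derivedSeries ℝ L 1).toSubmodule) (fun x _ y _ => hN x y)
  have pW := LieAux.Pair.top (G := G) eq hexp hbracket
    (H := 𝔴.toSubmodule) (fun x hx y hy => 𝔴.lie_mem hx hy)
  exact ⟨pW.simplyConnected eq, pN.simplyConnected eq,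
    fun g => LieAux.product eq hexp hbracket hN (LieAux.cartan_sup 𝔴 h𝔴) pN g⟩

end
end

section
/- Let G be a connected and simply connected solvable Lie group with Lie algebra 𝔤, and let W be the connected Lie subgroup of G corresponding to a Cartan subalgebra 𝔴 of 𝔤. Then the center of G is contained in W. -/
open Manifold

noncomputable section

section algebra
open LieModule LieAlgebra TensorProduct

theorem nil_aux (k : Type*) [Field k] [IsAlgClosed k] [CharZero k] {L : Type*} [LieRing L] [LieAlgebra k L] [LieAlgebra.IsSolvable L] (x : L) (hx : x ∈ derivedSeries k L 1) (n : ℕ) :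
    ∀ (V : Type*) [AddCommGroup V] [Module k V] [FiniteDimensional k V] [LieRingModule L V] [LieModule k L V], Module.finrank k V = n → IsNilpotent (toEnd k L V x) := by
  induction n using Nat.strong_induction_on with
  | _ n ih =>
  intro V _ _ _ _ _ hV
  rcases subsingleton_or_nontrivial V with h | h
  · exact ⟨1, Subsingleton.elim _ _⟩
  obtain ⟨χ, hχ⟩ := exists_nontrivial_weightSpace_of_isSolvable k L V
  obtain ⟨⟨v, hv⟩, hv0⟩ := exists_ne (0 : weightSpace V χ)
  have hv0 : v ≠ 0 := by simpa using hv0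
  rw [mem_weightSpace] at hv
  let N : LieSubmodule k L V := { (k ∙ v) with
    lie_mem := by
      intro y m hm
      obtain ⟨c, rfl⟩ := Submodule.mem_span_singleton.1 hm
      rw [lie_smul, hv]
      exact Submodule.smul_mem _ _ (Submodule.smul_mem _ _ (Submodule.mem_span_singleton_self v)) }
  have hχx : χ x = 0 := by
    have : (derivedSeries k L 1).toSubmodule ≤ LinearMap.ker χ := by
      rw [derivedSeries_def, derivedSeriesOfIdeal_succ, derivedSeriesOfIdeal_zero, LieSubmodule.lieIdeal_oper_eq_linear_span', Submodule.span_le]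
      rintro _ ⟨a, -, b, -, rfl⟩
      have : χ ⁅a, b⁆ • v = 0 := by
        rw [← hv, lie_lie, hv, hv, lie_smul, lie_smul, hv, hv, smul_smul, smul_smul, mul_comm, sub_self]
      simpa [hv0] using this
    exact this hx
  have hN : Module.finrank k (V ⧸ N) < n := by
    have h1 := Submodule.finrank_quotient_add_finrank (R := k) (k ∙ v)
    rw [finrank_span_singleton hv0, hV] at h1
    change Module.finrank k (V ⧸ (k ∙ v)) < n
    omega
  obtain ⟨m, hm⟩ := ih _ hN (V ⧸ N) rfl
  refine ⟨m + 1, ?_⟩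
  ext u
  have h2 : (toEnd k L V x ^ m) u ∈ (k ∙ v) := by
    have := LinearMap.congr_fun (Module.End.commute_pow_left_of_commute
      (LieSubmodule.Quotient.toEnd_comp_mk' N x) m) u
    simp [hm] at this
    exact (LieSubmodule.Quotient.mk_eq_zero' (N := N)).1 this.symm
  obtain ⟨c, hc⟩ := Submodule.mem_span_singleton.1 h2
  rw [pow_succ', Module.End.mul_apply, ← hc]
  simp [hv, hχx]

theorem nil_real {L : Type*} [LieRing L] [LieAlgebra ℝ L] [FiniteDimensional ℝ L] [LieAlgebra.IsSolvable L] (x : L) (hx : x ∈ derivedSeries ℝ L 1) : IsNilpotent (ad ℝ L x) := by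
  have h1 : (1:ℂ) ⊗ₜ[ℝ] x ∈ derivedSeries ℂ (ℂ ⊗[ℝ] L) 1 := by
    rw [derivedSeries_baseChange]
    exact Submodule.tmul_mem_baseChange_of_mem 1 hx
  have := nil_aux ℂ _ h1 _ (ℂ ⊗[ℝ] L) rfl
  rw [LieModule.toEnd_baseChange] at this
  obtain ⟨m, hm⟩ := this
  refine ⟨m, ?_⟩
  ext y
  have h3 : (LinearMap.baseChange ℂ (toEnd ℝ L L x) ^ m) ((1:ℂ) ⊗ₜ y) = 1 ⊗ₜ ((toEnd ℝ L L x ^ m) y) := by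
    clear hm
    induction m with
    | zero => simp
    | succ m ih => rw [pow_succ', pow_succ', Module.End.mul_apply, ih]; simp
  rw [hm] at h3
  have h4 : (toEnd ℝ L L x ^ m) y = 0 := by simpa using h3.symm
  exact h4

theorem cartan_sup {L : Type*} [LieRing L] [LieAlgebra ℝ L] [FiniteDimensional ℝ L] (W : LieSubalgebra ℝ L) (hW : W.IsCartanSubalgebra) :
   W.toSubmodule ⊔ (derivedSeries ℝ L 1).toSubmodule = ⊤ := by
  have h := (LieModule.isCompl_genWeightSpace_zero_posFittingComp ℝ W L).sup_eq_top
  have h0 : genWeightSpace L (0 : W → ℝ) = W.toLieSubmodule := LieAlgebra.rootSpace_zero_eq ℝ L W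
  rw [h0] at h
  have h := congrArg LieSubmodule.toSubmodule h
  rw [LieSubmodule.sup_toSubmodule] at h
  refine top_le_iff.1 (h.symm.le.trans (sup_le_sup (le_of_eq (by simp)) ?_))
  refine (show (posFittingComp ℝ W L).toSubmodule ≤ (lowerCentralSeries ℝ W L 1).toSubmodule from (posFittingComp_le_iInf_lowerCentralSeries ℝ W L).trans (iInf_le _ 1)).trans ?_
  rw [lowerCentralSeries_succ, LieSubmodule.lieIdeal_oper_eq_linear_span', Submodule.span_le]
  rintro _ ⟨a, -, b, -, rfl⟩
  exact LieSubmodule.lie_mem_lie (LieSubmodule.mem_top (a : L)) (LieSubmodule.mem_top _)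

/-- chain of ideals -/
theorem exists_chain {L : Type*} [LieRing L] [LieAlgebra ℝ L] [FiniteDimensional ℝ L] [LieAlgebra.IsSolvable L] :
   ∃ (F : ℕ → LieIdeal ℝ L) (n : ℕ), F 0 = derivedSeries ℝ L 1 ∧ (∀ k, F (k+1) ≤ F k) ∧ F n = ⊥ ∧ 
     ∀ k, ∀ x ∈ F 0, ∀ y ∈ F k, ⁅x, y⁆ ∈ F (k+1) := by
  set I := derivedSeries ℝ L 1 with hI
  have hn : LieModule.IsNilpotent I L := by
    rw [LieModule.isNilpotent_iff_forall (R := ℝ)]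
    intro x
    exact nil_real x.1 x.2
  obtain ⟨n, hn⟩ := (LieModule.isNilpotent_iff ℝ I L).1 hn
  have hle : ∀ k, ((fun N : LieIdeal ℝ L => ⁅I, N⁆)^[k] I).toSubmodule ≤ (lowerCentralSeries ℝ I L k).toSubmodule := by
    intro k
    induction k with
    | zero => simp
    | succ k ih =>
      rw [Function.iterate_succ_apply', LieSubmodule.lieIdeal_oper_eq_linear_span', Submodule.span_le]
      rintro _ ⟨a, ha, b, hb, rfl⟩
      rw [lowerCentralSeries_succ]
      exact LieSubmodule.lie_mem_lie (LieSubmodule.mem_top (⟨a, ha⟩ : I)) (ih hb)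
  refine ⟨fun k => (fun N => ⁅I, N⁆)^[k] I, n, rfl, ?_, ?_, ?_⟩
  · intro k
    beta_reduce
    rw [Function.iterate_succ_apply']
    exact LieSubmodule.lie_le_right _ _
  · have := hle n
    rw [hn] at this
    rw [eq_bot_iff]
    exact this
  · intro k x hx y hy
    beta_reduce at *
    rw [Function.iterate_succ_apply']
    exact LieSubmodule.lie_mem_lie hx hy

end algebra

section analysis
set_option linter.unusedSectionVars false
set_option linter.unnecessarySimpa false
open Filter Topology

variable {E : Type*} [NormedAddCommGroup E] [NormedSpace ℝ E]
    {G : Type*} [TopologicalSpace G] [Group G] [ChartedSpace E G]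

/-- the chart at the identity -/
abbrev ch (E G : Type*) [NormedAddCommGroup E] [NormedSpace ℝ E] [TopologicalSpace G] [Group G]
    [ChartedSpace E G] : PartialEquiv G E := extChartAt 𝓘(ℝ, E) (1 : G)

/-- derivative in the chart at the identity -/
def DD (f : ℝ → G) (t : ℝ) (ξ : E) : Prop :=
  ContinuousAt f t ∧ HasDerivAt (fun s => ch E G (f s)) ξ t

/-- left logarithmic derivative -/
def LD (c : ℝ → G) (t : ℝ) (ξ : E) : Prop := DD (fun s => (c t)⁻¹ * c s) t ξ

theorem symm_contMDiffAt [IsManifold 𝓘(ℝ, E) (⊤ : ℕ∞) G] :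
    ContMDiffAt 𝓘(ℝ, E) 𝓘(ℝ, E) (⊤ : ℕ∞) (ch E G).symm (ch E G 1) :=
  (contMDiffOn_extChartAt_symm (1 : G)).contMDiffAt (extChartAt_target_mem_nhds (1 : G))

theorem contDiffAt_chart_comp [IsManifold 𝓘(ℝ, E) (⊤ : ℕ∞) G] {V : Type*} [NormedAddCommGroup V]
    [NormedSpace ℝ V] {F : V → G} {v : V} (hF : ContMDiffAt 𝓘(ℝ, V) 𝓘(ℝ, E) (⊤ : ℕ∞) F v)
    (h : F v ∈ (ch E G).source) :
    ContDiffAt ℝ (⊤ : ℕ∞) (fun x => ch E G (F x)) v := by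
  rw [← contMDiffAt_iff_contDiffAt]
  have h1 : ContMDiffAt 𝓘(ℝ, E) 𝓘(ℝ, E) (⊤ : ℕ∞) (ch E G) (F v) := by
    apply contMDiffAt_extChartAt'
    simpa using h
  exact h1.comp v hF

theorem mem_source_one : (1 : G) ∈ (ch E G).source := mem_extChartAt_source (1 : G)

theorem ch_symm_one : (ch E G).symm (ch E G 1) = 1 := extChartAt_to_inv (1 : G)

theorem eventually_source {f : ℝ → G} {t : ℝ} (hf : ContinuousAt f t) (h : f t = 1) :
    ∀ᶠ s in 𝓝 t, (ch E G).symm (ch E G (f s)) = f s := by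
  have : (ch E G).source ∈ 𝓝 (f t) := by rw [h]; exact extChartAt_source_mem_nhds (1 : G)
  filter_upwards [hf this] with s hs
  exact (ch E G).left_inv hs

variable [LieGroup 𝓘(ℝ, E) (⊤ : ℕ∞) G]

theorem hasFDerivAt_mul_chart : HasFDerivAt
    (fun p : E × E => ch E G ((ch E G).symm p.1 * (ch E G).symm p.2))
    (ContinuousLinearMap.fst ℝ E E + ContinuousLinearMap.snd ℝ E E) (ch E G 1, ch E G 1) := by
  have : IsManifold 𝓘(ℝ, E) (⊤ : ℕ∞) G := inferInstance
  have h1 : ContMDiffAt 𝓘(ℝ, E × E) 𝓘(ℝ, E) (⊤ : ℕ∞)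
      (fun p : E × E => (ch E G).symm p.1 * (ch E G).symm p.2) (ch E G 1, ch E G 1) := by
    apply ContMDiffAt.mul
    · exact ContMDiffAt.comp (g := (ch E G).symm) (f := Prod.fst) (ch E G 1, ch E G 1) symm_contMDiffAt
        (contMDiffAt_iff_contDiffAt.2 contDiffAt_fst)
    · exact ContMDiffAt.comp (g := (ch E G).symm) (f := Prod.snd) (ch E G 1, ch E G 1) symm_contMDiffAt
        (contMDiffAt_iff_contDiffAt.2 contDiffAt_snd)
  have h2 := contDiffAt_chart_comp h1 (by
    rw [ch_symm_one, mul_one]; exact mem_source_one)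
  have h3 := (h2.differentiableAt (by simp)).hasFDerivAt
  have ht : ∀ᶠ x in 𝓝 (ch E G 1), ch E G ((ch E G).symm x) = x := by
    filter_upwards [extChartAt_target_mem_nhds (I := 𝓘(ℝ, E)) (1 : G)] with x hx
    exact (ch E G).right_inv hx
  suffices ha : fderiv ℝ (fun p : E × E => ch E G ((ch E G).symm p.1 * (ch E G).symm p.2)) (ch E G 1, ch E G 1) = ContinuousLinearMap.fst ℝ E E + ContinuousLinearMap.snd ℝ E E by
    rw [ha] at h3; exact h3
  set A := fderiv ℝ (fun p : E × E => ch E G ((ch E G).symm p.1 * (ch E G).symm p.2)) (ch E G 1, ch E G 1)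
  have hl : HasFDerivAt (fun x => ch E G ((ch E G).symm x * (ch E G).symm (ch E G 1)))
      (A.comp (ContinuousLinearMap.inl ℝ E E)) (ch E G 1) :=
    h3.comp (f := fun x => (x, ch E G 1)) (ch E G 1) (hasFDerivAt_prodMk_left _ _)
  have hr : HasFDerivAt (fun x => ch E G ((ch E G).symm (ch E G 1) * (ch E G).symm x))
      (A.comp (ContinuousLinearMap.inr ℝ E E)) (ch E G 1) :=
    h3.comp (f := fun x => (ch E G 1, x)) (ch E G 1) (hasFDerivAt_prodMk_right _ _)
  have hl' : A.comp (ContinuousLinearMap.inl ℝ E E) = ContinuousLinearMap.id ℝ E := by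
    refine hl.unique ((hasFDerivAt_id _).congr_of_eventuallyEq ?_)
    filter_upwards [ht] with x hx
    rw [ch_symm_one, mul_one, hx, id]
  have hr' : A.comp (ContinuousLinearMap.inr ℝ E E) = ContinuousLinearMap.id ℝ E := by
    refine hr.unique ((hasFDerivAt_id _).congr_of_eventuallyEq ?_)
    filter_upwards [ht] with x hx
    rw [ch_symm_one, one_mul, hx, id]
  ext x
  · simpa using DFunLike.congr_fun hl' x
  · simpa using DFunLike.congr_fun hr' x

theorem DD_unique {f : ℝ → G} {t : ℝ} {ξ η : E} (hf : DD f t ξ) (hg : DD f t η) : ξ = η :=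
  hf.2.unique hg.2

theorem DD_mul [IsTopologicalGroup G] {f g : ℝ → G} {t : ℝ} {ξ η : E} (hf : DD f t ξ) (hg : DD g t η) (h1 : f t = 1)
    (h2 : g t = 1) : DD (fun s => f s * g s) t (ξ + η) := by
  refine ⟨hf.1.mul hg.1, ?_⟩
  have h' : HasFDerivAt
    (fun p : E × E => ch E G ((ch E G).symm p.1 * (ch E G).symm p.2))
    (ContinuousLinearMap.fst ℝ E E + ContinuousLinearMap.snd ℝ E E) (ch E G (f t), ch E G (g t)) := by
    rw [h1, h2]; exact hasFDerivAt_mul_chart (E := E) (G := G)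
  have := h'.comp_hasDerivAt (f := fun s => (ch E G (f s), ch E G (g s))) t (hf.2.prodMk hg.2)
  refine (this.congr_of_eventuallyEq ?_)
  filter_upwards [eventually_source (E := E) hf.1 h1, eventually_source (E := E) hg.1 h2] with s hs1 hs2
  simp only [Function.comp, hs1, hs2]

theorem DD_comp {f : ℝ → G} {t : ℝ} {ξ : E} (hf : DD f t ξ) (h1 : f t = 1) {F : G → G}
    (hF : ContMDiffAt 𝓘(ℝ, E) 𝓘(ℝ, E) (⊤ : ℕ∞) F 1) {A : E →L[ℝ] E}
    (hA : HasFDerivAt (fun x => ch E G (F ((ch E G).symm x))) A (ch E G 1)) :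
    DD (fun s => F (f s)) t (A ξ) := by
  constructor
  · refine ContinuousAt.comp (g := F) ?_ hf.1
    rw [h1]; exact hF.continuousAt
  · have hA' : HasFDerivAt (fun x => ch E G (F ((ch E G).symm x))) A (ch E G (f t)) := by
      rw [h1]; exact hA
    have := hA'.comp_hasDerivAt (f := fun s => ch E G (f s)) t hf.2
    refine (this.congr_of_eventuallyEq ?_)
    filter_upwards [eventually_source (E := E) hf.1 h1] with s hs1
    simp only [Function.comp, hs1]

theorem chart_map_differentiable {F : G → G}
    (hF : ContMDiffAt 𝓘(ℝ, E) 𝓘(ℝ, E) (⊤ : ℕ∞) F 1) (h : F 1 ∈ (ch E G).source) :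
    DifferentiableAt ℝ (fun x => ch E G (F ((ch E G).symm x))) (ch E G 1) := by
  have h1 : ContMDiffAt 𝓘(ℝ, E) 𝓘(ℝ, E) (⊤ : ℕ∞) (fun x => F ((ch E G).symm x)) (ch E G 1) := by
    refine ContMDiffAt.comp (g := F) (ch E G 1) ?_ symm_contMDiffAt
    rw [ch_symm_one]; exact hF
  exact (contDiffAt_chart_comp h1 (by rw [ch_symm_one]; exact h)).differentiableAt (by simp)

theorem contMDiff_conj (g : G) : ContMDiff 𝓘(ℝ, E) 𝓘(ℝ, E) (⊤ : ℕ∞) (fun x : G => g * x * g⁻¹) :=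
  (contMDiff_const.mul contMDiff_id).mul contMDiff_const

theorem AdMap_hasFDerivAt (g : G) : ∃ A : E →L[ℝ] E, (∀ w, AdMap g w = A w) ∧
    HasFDerivAt (fun x => ch E G (g * (ch E G).symm x * g⁻¹)) A (ch E G 1) := by
  have h := ((contMDiff_conj (E := E) g).mdifferentiable (by simp) 1).hasMFDerivAt.2
  refine ⟨mfderiv 𝓘(ℝ, E) 𝓘(ℝ, E) (fun x : G => g * x * g⁻¹) (1 : G), fun w => rfl, ?_⟩
  simp only [modelWithCornersSelf_coe, Set.range_id] at h
  have e : writtenInExtChartAt 𝓘(ℝ, E) 𝓘(ℝ, E) (1 : G) (fun x : G => g * x * g⁻¹) =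
      (fun x => ch E G (g * (ch E G).symm x * g⁻¹)) := by
    unfold writtenInExtChartAt
    simp only [mul_one, mul_inv_cancel]
    rfl
  rw [e] at h
  exact hasFDerivWithinAt_univ.1 h

/-- Ad as a continuous linear map -/
def AdL (g : G) : E →L[ℝ] E := (AdMap_hasFDerivAt (E := E) g).choose

theorem AdL_apply (g : G) (w : E) : AdMap g w = AdL g w := (AdMap_hasFDerivAt (E := E) g).choose_spec.1 w

theorem DD_conj {f : ℝ → G} {t : ℝ} {ξ : E} (hf : DD f t ξ) (h1 : f t = 1) (g : G) :
    DD (fun s => g * f s * g⁻¹) t (AdL g ξ) :=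
  DD_comp hf h1 (F := fun x => g * x * g⁻¹) (contMDiff_conj g 1) (AdMap_hasFDerivAt (E := E) g).choose_spec.2

theorem DD_const (t : ℝ) : DD (fun _ => (1 : G)) t (0 : E) := ⟨continuousAt_const, hasDerivAt_const _ _⟩

theorem DD_inv [IsTopologicalGroup G] {f : ℝ → G} {t : ℝ} {ξ : E} (hf : DD f t ξ) (h1 : f t = 1) :
    DD (fun s => (f s)⁻¹) t (-ξ) := by
  have hF : ContMDiffAt 𝓘(ℝ, E) 𝓘(ℝ, E) (⊤ : ℕ∞) (fun x : G => x⁻¹) 1 := contMDiffAt_id.inv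
  have h := DD_comp hf h1 hF (chart_map_differentiable hF (by simpa using mem_source_one (E := E) (G := G))).hasFDerivAt
  have h2 := DD_mul hf h h1 (by simp [h1])
  simp only [mul_inv_cancel] at h2
  have h3 := DD_unique h2 (DD_const t)
  rwa [add_eq_zero_iff_neg_eq.1 h3]

theorem LD_mul [IsTopologicalGroup G] {c d : ℝ → G} {t : ℝ} {ξ η : E} (hc : LD c t ξ) (hd : LD d t η) :
    LD (fun s => c s * d s) t (AdL (d t)⁻¹ ξ + η) := by
  have := DD_mul (DD_conj hc (by simp) (d t)⁻¹) hd (by simp) (by simp)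
  unfold LD
  convert this using 2 with s
  group

theorem LD_inv [IsTopologicalGroup G] {c : ℝ → G} {t : ℝ} {ξ : E} (hc : LD c t ξ) :
    LD (fun s => (c s)⁻¹) t (AdL (c t) (-ξ)) := by
  have := DD_conj (DD_inv hc (by simp)) (by simp) (c t)
  unfold LD
  convert this using 2 with s
  group

theorem DD_reparam {f : ℝ → G} {a : ℝ → ℝ} {t a' : ℝ} {ξ : E} (hf : DD f (a t) ξ)
    (ha : HasDerivAt a a' t) : DD (fun s => f (a s)) t (a' • ξ) :=
  ⟨ContinuousAt.comp (g := f) hf.1 ha.continuousAt, hf.2.scomp t ha⟩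

theorem LD_reparam {c : ℝ → G} {a : ℝ → ℝ} {t a' : ℝ} {ξ : E} (hf : LD c (a t) ξ)
    (ha : HasDerivAt a a' t) : LD (fun s => c (a s)) t (a' • ξ) :=
  DD_reparam (f := fun s => (c (a t))⁻¹ * c s) hf ha

theorem onePar_DD {ψ : ℝ → G} {v : E} (h : IsOneParamSubgroup ψ v) : DD ψ 0 v := by
  obtain ⟨h0, -, h2, h3⟩ := h
  have h := (h2.mdifferentiable (by simp) 0).hasMFDerivAt.2
  refine ⟨h2.continuous.continuousAt, ?_⟩
  simp only [modelWithCornersSelf_coe, Set.range_id] at h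
  have e : writtenInExtChartAt 𝓘(ℝ, ℝ) 𝓘(ℝ, E) 0 ψ = (fun x => ch E G (ψ x)) := by
    unfold writtenInExtChartAt
    simp only [h0]
    rfl
  rw [e] at h
  rw [← h3]
  exact HasFDerivAt.hasDerivAt (f := fun x => ch E G (ψ x)) (hasFDerivWithinAt_univ.1 h)

theorem onePar_LD {ψ : ℝ → G} {v : E} (h : IsOneParamSubgroup ψ v) (t : ℝ) : LD ψ t v := by
  have h1 : ∀ s, (ψ t)⁻¹ * ψ s = ψ (s - t) := by
    intro s
    rw [inv_mul_eq_iff_eq_mul, ← h.2.1]; congr 1; ring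
  unfold LD
  simp only [h1]
  have := DD_reparam (f := ψ) (a := fun s => s - t) (t := t) (a' := 1) (ξ := v)
    (by simpa using onePar_DD h) ((hasDerivAt_id t).sub_const t)
  simpa using this

theorem AdL_one : AdL (1 : G) = ContinuousLinearMap.id ℝ E := by
  ext w
  rw [← AdL_apply, AdMap]
  have e : (fun x : G => 1 * x * 1⁻¹) = id := by ext x; simp
  rw [e]
  exact DFunLike.congr_fun (mfderiv_id (I := 𝓘(ℝ, E)) (x := (1 : G))) w

theorem AdL_center (z : G) (hz : z ∈ Subgroup.center G) : AdL z = ContinuousLinearMap.id ℝ E := by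
  rw [← AdL_one (G := G)]
  ext w
  rw [← AdL_apply, ← AdL_apply, AdMap, AdMap]
  have : (fun x : G => z * x * z⁻¹) = (fun x => 1 * x * 1⁻¹) := by
    ext x
    rw [← (Subgroup.mem_center_iff.1 hz x)]; simp
  rw [this]
  rfl

theorem AdL_mul (g h : G) : AdL (g * h) = (AdL g).comp (AdL h : E →L[ℝ] E) := by
  have h1 := (AdMap_hasFDerivAt (E := E) g).choose_spec.2
  have h2 := (AdMap_hasFDerivAt (E := E) h).choose_spec.2
  have h3 := (AdMap_hasFDerivAt (E := E) (g * h)).choose_spec.2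
  change HasFDerivAt _ (AdL g) _ at h1
  change HasFDerivAt _ (AdL h) _ at h2
  change HasFDerivAt _ (AdL (g * h)) _ at h3
  have e : ch E G (h * (ch E G).symm (ch E G 1) * h⁻¹) = ch E G 1 := by
    rw [ch_symm_one]; simp
  have h1' : HasFDerivAt (fun x => ch E G (g * (ch E G).symm x * g⁻¹)) (AdL g) (ch E G (h * (ch E G).symm (ch E G 1) * h⁻¹)) := by
    rw [e]; exact h1
  refine h3.unique ((h1'.comp (f := fun x => ch E G (h * (ch E G).symm x * h⁻¹)) _ h2).congr_of_eventuallyEq ?_)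
  have hc : ContinuousAt (fun x => h * (ch E G).symm x * h⁻¹) (ch E G 1) := by
    refine ContinuousAt.comp (g := fun x => h * x * h⁻¹) ?_ (symm_contMDiffAt).continuousAt
    exact (contMDiff_conj (E := E) h).continuous.continuousAt
  have hs : (ch E G).source ∈ 𝓝 (h * (ch E G).symm (ch E G 1) * h⁻¹) := by
    rw [ch_symm_one]
    simpa using extChartAt_source_mem_nhds (I := 𝓘(ℝ, E)) (1 : G)
  filter_upwards [hc hs] with x hx
  simp only [Function.comp]
  rw [(ch E G).left_inv hx]
  congr 1
  group

theorem LD_zero [IsTopologicalGroup G] {c : ℝ → G} (hc : ∀ t, LD c t (0 : E)) (t : ℝ) : c t = c 0 := by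
  have hlc : IsLocallyConstant c := by
    rw [IsLocallyConstant.iff_eventually_eq]
    intro t
    have hcont : Continuous c := by
      rw [continuous_iff_continuousAt]
      intro s
      have := (continuous_const_mul (c s)).continuousAt.comp (hc s).1
      simpa [Function.comp_def] using this
    have hs : ∀ᶠ s in 𝓝 t, (c t)⁻¹ * c s ∈ (ch E G).source := by
      have : ContinuousAt (fun s => (c t)⁻¹ * c s) t := (continuous_const.mul hcont).continuousAt
      apply this
      simpa using extChartAt_source_mem_nhds (I := 𝓘(ℝ, E)) (1 : G)
    obtain ⟨ε, hε, hb⟩ := Metric.eventually_nhds_iff_ball.1 hs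
    filter_upwards [Metric.ball_mem_nhds t hε] with y hy
    have hd : ∀ s ∈ Metric.ball t ε, HasDerivAt (fun s => ch E G ((c t)⁻¹ * c s)) 0 s := by
      intro s hs
      have hF : ContMDiffAt 𝓘(ℝ, E) 𝓘(ℝ, E) (⊤ : ℕ∞) (fun x : G => ((c t)⁻¹ * c s) * x) 1 :=
        contMDiffAt_const.mul contMDiffAt_id
      have := DD_comp (hc s) (by simp) hF
        (chart_map_differentiable hF (by simpa using hb s hs)).hasFDerivAt
      have := this.2
      simp only [map_zero] at this
      convert this using 3
      group
    have h1 : ch E G ((c t)⁻¹ * c y) = ch E G ((c t)⁻¹ * c t) := by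
      refine (convex_ball t ε).is_const_of_fderivWithin_eq_zero (𝕜 := ℝ)
        (f := fun s => ch E G ((c t)⁻¹ * c s)) ?_ ?_ hy (Metric.mem_ball_self hε)
      · intro s hs
        exact (hd s hs).differentiableAt.differentiableWithinAt
      · intro s hs
        rw [fderivWithin_of_isOpen Metric.isOpen_ball hs]
        ext
        simpa using (hd s hs).deriv
    have h2 := (ch E G).injOn (hb y hy) (hb t (Metric.mem_ball_self hε)) h1
    exact mul_left_cancel h2
  exact hlc.apply_eq_of_preconnectedSpace t 0

end analysis

section main
open Filter Topology
set_option linter.unusedSectionVars false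

variable {E : Type*} [NormedAddCommGroup E] [NormedSpace ℝ E] [FiniteDimensional ℝ E]

theorem exp_sub_mem (A : E →L[ℝ] E) (U : Submodule ℝ E) (hU : ∀ u ∈ U, A u ∈ U) (x : E) (hx : A x ∈ U) :
    NormedSpace.exp A x - x ∈ U := by
  have hclosed : IsClosed (U : Set E) := Submodule.closed_of_finiteDimensional U
  have : CompleteSpace E := FiniteDimensional.complete ℝ E
  have h1 : HasSum (fun n : ℕ => ((n.factorial : ℝ)⁻¹ • A ^ n)) (NormedSpace.exp A) :=
    NormedSpace.exp_series_hasSum_exp' (𝕂 := ℝ) A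
  have h2 := (ContinuousLinearMap.apply ℝ E x).hasSum h1
  have h3 := (hasSum_nat_add_iff' 1).2 h2
  have h4 : ∀ n : ℕ, (A ^ (n + 1)) x ∈ U := by
    intro n
    induction n with
    | zero => simpa using hx
    | succ n ih =>
      rw [pow_succ']
      exact hU _ ih
  have h5 : NormedSpace.exp A x - x = (ContinuousLinearMap.apply ℝ E x) (NormedSpace.exp A) - ∑ i ∈ Finset.range 1, (ContinuousLinearMap.apply ℝ E x) (((i.factorial : ℝ)⁻¹ • A ^ i)) := by
    simp
  rw [h5]
  refine hclosed.mem_of_tendsto h3 (Eventually.of_forall fun s => ?_)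
  refine Submodule.sum_mem _ fun i _ => ?_
  exact Submodule.smul_mem U _ (h4 i)

theorem exp_mem (A : E →L[ℝ] E) (U : Submodule ℝ E) (hU : ∀ u ∈ U, A u ∈ U) (x : E) (hx : x ∈ U) :
    NormedSpace.exp A x ∈ U := by
  have := U.add_mem (exp_sub_mem A U hU x (hU x hx)) hx
  simpa using this

theorem continuous_exp_apply (A : E →L[ℝ] E) {a : ℝ → ℝ} {u : ℝ → E} (ha : Continuous a) (hu : Continuous u) :
    Continuous fun t => NormedSpace.exp (a t • A) (u t) := by
  have : CompleteSpace E := FiniteDimensional.complete ℝ E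
  refine Continuous.clm_apply ?_ hu
  let : NormedAlgebra ℚ (E →L[ℝ] E) := NormedAlgebra.restrictScalars ℚ ℝ _
  have : Continuous (NormedSpace.exp : (E →L[ℝ] E) → (E →L[ℝ] E)) := NormedSpace.exp_continuous
  exact this.comp (ha.smul continuous_const)

variable {L : Type*} [LieRing L] [LieAlgebra ℝ L] [FiniteDimensional ℝ L]

/-- the adjoint representation transported to `E` -/
def adE (eq : L ≃ₗ[ℝ] E) (v : L) : E →L[ℝ] E :=
  LinearMap.toContinuousLinearMap (eq.toLinearMap ∘ₗ (LieAlgebra.ad ℝ L v) ∘ₗ eq.symm.toLinearMap)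

theorem adE_apply (eq : L ≃ₗ[ℝ] E) (v w : L) : adE eq v (eq w) = eq ⁅v, w⁆ := by
  simp [adE]

theorem adE_apply' (eq : L ≃ₗ[ℝ] E) (v : L) (w : E) : adE eq v w = eq ⁅v, eq.symm w⁆ := by
  simp [adE]

theorem smul_adE_mem (eq : L ≃ₗ[ℝ] E) (v : L) (a : ℝ) (U : Submodule ℝ L) (hU : ∀ u ∈ U, ⁅v, u⁆ ∈ U) (x : E)
    (hx : x ∈ U.map eq.toLinearMap) : (a • adE eq v) x ∈ U.map eq.toLinearMap := by
  obtain ⟨u, hu, rfl⟩ := hx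
  refine Submodule.smul_mem _ a ?_
  exact ⟨_, hU u hu, (adE_apply eq v u).symm⟩

variable {G : Type*} [TopologicalSpace G] [Group G] [ChartedSpace E G] [LieGroup 𝓘(ℝ, E) (⊤ : ℕ∞) G]
    [IsTopologicalGroup G]
    (eq : L ≃ₗ[ℝ] E)

theorem AdL_exp
    (hbracket : ∀ (v w : L) (ψ : ℝ → G), IsOneParamSubgroup ψ (eq v) →
      HasDerivAt (fun t : ℝ => AdMap (ψ t) (eq w)) (eq ⁅v, w⁆) 0)
    {v : L} {ψ : ℝ → G} (hψ : IsOneParamSubgroup ψ (eq v)) (t : ℝ) :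
    (AdL (ψ t) : E →L[ℝ] E) = NormedSpace.exp (t • adE eq v) := by
  have : CompleteSpace E := FiniteDimensional.complete ℝ E
  ext w
  have h0 : ∀ x : E, HasDerivAt (fun t : ℝ => (AdL (ψ t) : E →L[ℝ] E) x) (adE eq v x) 0 := by
    intro x
    have := hbracket v (eq.symm x) ψ hψ
    simp only [AdL_apply, LinearEquiv.apply_symm_apply] at this
    rwa [adE_apply']
  have h1 : ∀ t : ℝ, HasDerivAt (fun t : ℝ => (AdL (ψ t) : E →L[ℝ] E) w) (adE eq v (AdL (ψ t) w)) t := by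
    intro t
    have h := h0 (AdL (ψ t) w)
    have h' : HasDerivAt (fun s : ℝ => (AdL (ψ s) : E →L[ℝ] E) (AdL (ψ t) w)) (adE eq v (AdL (ψ t) w)) (t - t) := by
      simpa using h
    have := h'.comp_sub_const t t
    refine this.congr_of_eventuallyEq (Eventually.of_forall fun s => ?_)
    have e : ψ s = ψ (s - t) * ψ t := by rw [← hψ.2.1]; simp
    simp only [e, AdL_mul]
    rfl
  have h2 : ∀ t : ℝ, HasDerivAt (fun t : ℝ => NormedSpace.exp (t • (-adE eq v)) (AdL (ψ t) w)) 0 t := by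
    intro t
    have := (hasDerivAt_exp_smul_const (𝕂 := ℝ) (-adE eq v) t).clm_apply (h1 t)
    convert this using 1
    simp
  have h3 : NormedSpace.exp (t • (-adE eq v)) (AdL (ψ t) w) = w := by
    have := is_const_of_deriv_eq_zero (fun t => (h2 t).differentiableAt) (fun t => (h2 t).deriv) t 0
    simpa [hψ.1, AdL_one] using this
  have h4 : NormedSpace.exp (t • adE eq v) * NormedSpace.exp (t • (-adE eq v)) = 1 := by
    let : NormedAlgebra ℚ (E →L[ℝ] E) := NormedAlgebra.restrictScalars ℚ ℝ _
    rw [← NormedSpace.exp_add_of_commute]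
    · simp
    · rw [smul_neg]; exact (Commute.refl _).neg_right
  have h5 := DFunLike.congr_fun h4 (AdL (ψ t) w)
  simp only [mul_apply_eq_comp, h3] at h5
  exact h5.symm

/-- subspaces obtained by adding one normalizing vector at a time -/
inductive Good : Submodule ℝ L → Prop
  | bot : Good ⊥
  | step (U : Submodule ℝ L) (e : L) : Good U → (∀ u ∈ U, ⁅e, u⁆ ∈ U) → Good (U ⊔ Submodule.span ℝ {e})

theorem curve_mem
    (hexp : ∀ v : E, ∃ ψ : ℝ → G, IsOneParamSubgroup ψ v)
    (hbracket : ∀ (v w : L) (ψ : ℝ → G), IsOneParamSubgroup ψ (eq v) →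
      HasDerivAt (fun t : ℝ => AdMap (ψ t) (eq w)) (eq ⁅v, w⁆) 0)
    {U : Submodule ℝ L} (hU : Good U) : ∀ (c : ℝ → G) (ξ : ℝ → E), Continuous ξ →
    (∀ t, LD c t (ξ t)) → (∀ t, eq.symm (ξ t) ∈ U) → c 0 = 1 → ∀ t, c t ∈ integralSubgroup (G := G) eq (U : Set L) := by
  induction hU with
  | bot =>
    intro c ξ _ hc hξ h0 t
    have : c t = 1 := by
      rw [← h0]
      refine LD_zero (E := E) (fun t => ?_) t
      have h := hc t
      have h1 : ξ t = 0 := by simpa using hξ t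
      rwa [h1] at h
    rw [this]; exact one_mem _
  | step U e hU he ih =>
    by_cases heU : e ∈ U
    · have : U ⊔ Submodule.span ℝ {e} = U := by simpa using heU
      rw [this]; exact ih
    intro c ξ hcont hc hξ h0 t
    obtain ⟨f, hfe, hfU⟩ := Submodule.exists_le_ker_of_notMem heU
    have hx : ∀ t, ∃ a : ℝ, eq.symm (ξ t) - a • e ∈ U := by
      intro t
      obtain ⟨u, hu, v, hv, huv⟩ := Submodule.mem_sup.1 (hξ t)
      obtain ⟨a, rfl⟩ := Submodule.mem_span_singleton.1 hv
      exact ⟨a, by rw [← huv]; simpa using hu⟩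
    set a : ℝ → ℝ := fun t => (f e)⁻¹ * f (eq.symm (ξ t)) with ha
    have ha' : ∀ t, eq.symm (ξ t) - a t • e ∈ U := by
      intro t
      obtain ⟨b, hb⟩ := hx t
      have h1 := hfU hb
      simp only [LinearMap.mem_ker, map_sub, map_smul, smul_eq_mul, sub_eq_zero] at h1
      have : a t = b := by simp only [ha, h1]; field_simp
      rwa [this]
    have hac : Continuous a := by
      have : Continuous (f ∘ₗ eq.symm.toLinearMap) := LinearMap.continuous_of_finiteDimensional _
      exact continuous_const.mul (this.comp hcont)
    set b : ℝ → ℝ := fun t => ∫ s in (0 : ℝ)..t, a s with hb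
    have hbd : ∀ t, HasDerivAt b (a t) t := fun t => (hac.integral_hasStrictDerivAt 0 t).hasDerivAt
    have hbc : Continuous b := continuous_iff_continuousAt.2 fun t => (hbd t).continuousAt
    obtain ⟨ψ, hψ⟩ := hexp (eq e)
    have hd : ∀ t, LD (fun s => ψ (b s)) t (a t • eq e) := fun t =>
      LD_reparam (onePar_LD hψ (b t)) (hbd t)
    have hcd : ∀ t, LD (fun s => c s * (ψ (b s))⁻¹) t (NormedSpace.exp (b t • adE eq e) (ξ t - a t • eq e)) := by
      intro t
      have := LD_mul (hc t) (LD_inv (hd t))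
      rw [inv_inv, AdL_exp eq hbracket hψ] at this
      rw [map_sub, sub_eq_add_neg, ← map_neg]
      exact this
    have hmem := ih (fun s => c s * (ψ (b s))⁻¹) (fun t => NormedSpace.exp (b t • adE eq e) (ξ t - a t • eq e))
      (continuous_exp_apply _ hbc (hcont.sub (hac.smul continuous_const))) hcd (by
        intro t
        have h1 : (ξ t - a t • eq e) ∈ U.map eq.toLinearMap := ⟨_, ha' t, by simp⟩
        obtain ⟨u, hu, hu'⟩ := exp_mem (b t • adE eq e) _ (smul_adE_mem eq e (b t) U he) _ h1
        rw [← hu']; simpa using hu) (by simp [h0, hb, hψ.1]) t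
    have h1 : c t = (c t * (ψ (b t))⁻¹) * ψ (b t) := by group
    rw [h1]
    refine mul_mem (Subgroup.closure_mono ?_ hmem) (Subgroup.subset_closure ⟨e, ?_, ψ, hψ, _, rfl⟩)
    · rintro g ⟨v, hv, h⟩
      exact ⟨v, Submodule.mem_sup_left hv, h⟩
    · exact Submodule.mem_sup_right (Submodule.mem_span_singleton_self e)

theorem good_ext {U V : Submodule ℝ L} (hV : Good V) (hVU : V ≤ U)
    (h : ∀ e ∈ U, ∀ u ∈ U, ⁅e, u⁆ ∈ V) : Good U := by
  classical
  obtain ⟨s, hs⟩ := (IsNoetherian.noetherian U)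
  have key : ∀ s' : Finset L, (s' : Set L) ⊆ U → Good (V ⊔ Submodule.span ℝ (s' : Set L)) := by
    intro s'
    induction s' using Finset.induction_on with
    | empty => intro _; simpa using hV
    | insert e s' hes ih =>
      intro hsub
      rw [Finset.coe_insert, Set.insert_subset_iff] at hsub
      have : V ⊔ Submodule.span ℝ ((insert e s' : Finset L) : Set L) =
          (V ⊔ Submodule.span ℝ (s' : Set L)) ⊔ Submodule.span ℝ {e} := by
        rw [Finset.coe_insert, Submodule.span_insert, sup_assoc, sup_comm (Submodule.span ℝ {e})]
      rw [this]
      refine Good.step _ _ (ih hsub.2) fun u hu => ?_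
      refine Submodule.mem_sup_left (h e hsub.1 u ?_)
      exact (sup_le hVU (Submodule.span_le.2 hsub.2)) hu
  have := key s (by rw [← hs]; exact Submodule.subset_span)
  rwa [hs, sup_eq_right.2 hVU] at this

theorem onePar_conj {ψ : ℝ → G} {v : E} (h : IsOneParamSubgroup ψ v) (g : G) :
    IsOneParamSubgroup (fun t => g * ψ t * g⁻¹) (AdL g v) := by
  have hs : ContMDiff 𝓘(ℝ, ℝ) 𝓘(ℝ, E) (⊤ : ℕ∞) (fun t => g * ψ t * g⁻¹) :=
    (contMDiff_conj g).comp h.2.2.1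
  obtain ⟨w, hw⟩ : ∃ w : E, (mfderiv 𝓘(ℝ, ℝ) 𝓘(ℝ, E) (fun t => g * ψ t * g⁻¹) 0 (1 : ℝ) : E) = w := ⟨_, rfl⟩
  have h1 : IsOneParamSubgroup (fun t => g * ψ t * g⁻¹) w :=
    ⟨by simp [h.1], fun s t => by beta_reduce; rw [h.2.1]; group, hs, hw⟩
  have h2 := DD_unique (onePar_DD h1) (DD_conj (onePar_DD h) h.1 g)
  rwa [h2] at h1

theorem onePar_inv {ψ : ℝ → G} {v : E} (h : IsOneParamSubgroup ψ v) (t : ℝ) : (ψ t)⁻¹ = ψ (-t) := by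
  rw [inv_eq_iff_mul_eq_one, ← h.2.1]; simp [h.1]

/-- elements generated by `S` preserve subspaces normalized by `S` -/
theorem AdL_mem_of_closure
    (hbracket : ∀ (v w : L) (ψ : ℝ → G), IsOneParamSubgroup ψ (eq v) →
      HasDerivAt (fun t : ℝ => AdMap (ψ t) (eq w)) (eq ⁅v, w⁆) 0)
    (S : Set L) (U : Submodule ℝ L) (hS : ∀ v ∈ S, ∀ u ∈ U, ⁅v, u⁆ ∈ U) (g : G)
    (hg : g ∈ integralSubgroup (G := G) eq S) : ∀ x ∈ U.map eq.toLinearMap, AdL g x ∈ U.map eq.toLinearMap := by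
  refine Subgroup.closure_induction'' (p := fun g _ => ∀ x ∈ U.map eq.toLinearMap, AdL g x ∈ U.map eq.toLinearMap)
    ?_ ?_ ?_ ?_ hg
  · rintro _ ⟨v, hv, ψ, hψ, t, rfl⟩ x hx
    rw [AdL_exp eq hbracket hψ]
    exact exp_mem _ _ (smul_adE_mem eq v t U (hS v hv)) _ hx
  · rintro _ ⟨v, hv, ψ, hψ, t, rfl⟩ x hx
    rw [onePar_inv hψ, AdL_exp eq hbracket hψ]
    exact exp_mem _ _ (smul_adE_mem eq v (-t) U (hS v hv)) _ hx
  · intro x hx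
    rw [AdL_one]; exact hx
  · intro a b _ _ ha hb x hx
    rw [AdL_mul]
    exact ha _ (hb _ hx)

theorem conj_mem_integral (U : Submodule ℝ L) (g : G)
    (hg : ∀ x ∈ U.map eq.toLinearMap, AdL g x ∈ U.map eq.toLinearMap) (h : G)
    (hh : h ∈ integralSubgroup (G := G) eq (U : Set L)) : g * h * g⁻¹ ∈ integralSubgroup (G := G) eq (U : Set L) := by
  refine Subgroup.closure_induction (p := fun h _ => g * h * g⁻¹ ∈ integralSubgroup (G := G) eq (U : Set L)) ?_ ?_ ?_ ?_ hh
  · rintro _ ⟨v, hv, ψ, hψ, t, rfl⟩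
    obtain ⟨u, hu, hu'⟩ := hg (eq v) ⟨v, hv, rfl⟩
    refine Subgroup.subset_closure ⟨u, hu, fun t => g * ψ t * g⁻¹, ?_, t, rfl⟩
    have := onePar_conj hψ g
    rw [← hu'] at this
    exact this
  · simp
  · intro a b _ _ ha hb
    have := mul_mem ha hb
    simpa [mul_assoc] using this
  · intro a _ ha
    have := inv_mem ha
    simpa [mul_assoc] using this

theorem exp_mul_exp
    (hexp : ∀ v : E, ∃ ψ : ℝ → G, IsOneParamSubgroup ψ v)
    (hbracket : ∀ (v w : L) (ψ : ℝ → G), IsOneParamSubgroup ψ (eq v) →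
      HasDerivAt (fun t : ℝ => AdMap (ψ t) (eq w)) (eq ⁅v, w⁆) 0)
    {X Y : L} {V : Submodule ℝ L} (hV : Good V) (hX : ∀ u ∈ V, ⁅X, u⁆ ∈ V)
    (hY : ∀ u ∈ V, ⁅Y, u⁆ ∈ V) (hXY : ⁅Y, X⁆ ∈ V) {ψ₁ ψ₂ ψ₃ : ℝ → G}
    (h₁ : IsOneParamSubgroup ψ₁ (eq X)) (h₂ : IsOneParamSubgroup ψ₂ (eq Y))
    (h₃ : IsOneParamSubgroup ψ₃ (eq (X + Y))) (t : ℝ) :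
    ψ₁ t * ψ₂ t * (ψ₃ t)⁻¹ ∈ integralSubgroup (G := G) eq (V : Set L) := by
  refine curve_mem eq hexp hbracket hV (fun t => ψ₁ t * ψ₂ t * (ψ₃ t)⁻¹)
    (fun t => NormedSpace.exp (t • adE eq (X + Y)) (NormedSpace.exp ((-t) • adE eq Y) (eq X) - eq X)) ?_ ?_ ?_ ?_ t
  · exact continuous_exp_apply _ continuous_id ((continuous_exp_apply _ continuous_neg continuous_const).sub continuous_const)
  · intro t
    have := LD_mul (LD_mul (onePar_LD h₁ t) (onePar_LD h₂ t)) (LD_inv (onePar_LD h₃ t))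
    rw [inv_inv, onePar_inv h₂, AdL_exp eq hbracket h₂, AdL_exp eq hbracket h₃, ← map_add] at this
    convert this using 2
    rw [map_add]; abel
  · intro t
    have h1 : NormedSpace.exp ((-t) • adE eq Y) (eq X) - eq X ∈ V.map eq.toLinearMap := by
      refine exp_sub_mem _ _ (smul_adE_mem eq Y (-t) V hY) _ ?_
      exact Submodule.smul_mem _ (-t) ⟨_, hXY, (adE_apply eq Y X).symm⟩
    have h2 := exp_mem _ _ (smul_adE_mem eq (X + Y) t V (fun u hu => by
      rw [add_lie]; exact add_mem (hX u hu) (hY u hu))) _ h1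
    obtain ⟨u, hu, hu'⟩ := h2
    rw [← hu']; simpa using hu
  · simp [h₁.1, h₂.1, h₃.1]

end main

section main2
open Filter Topology
set_option linter.unusedSectionVars false

variable {E : Type*} [NormedAddCommGroup E] [NormedSpace ℝ E] [FiniteDimensional ℝ E]
    {L : Type*} [LieRing L] [LieAlgebra ℝ L] [FiniteDimensional ℝ L]
    {G : Type*} [TopologicalSpace G] [Group G] [ChartedSpace E G] [LieGroup 𝓘(ℝ, E) (⊤ : ℕ∞) G]
    [IsTopologicalGroup G]
    (eq : L ≃ₗ[ℝ] E)

theorem onePar_smul {ψ : ℝ → G} {v : E} (h : IsOneParamSubgroup ψ v) (a : ℝ) :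
    IsOneParamSubgroup (fun t => ψ (a * t)) (a • v) := by
  have hs : ContMDiff 𝓘(ℝ, ℝ) 𝓘(ℝ, E) (⊤ : ℕ∞) (fun t => ψ (a * t)) :=
    h.2.2.1.comp (contMDiff_iff_contDiff.2 (contDiff_const.mul contDiff_id))
  obtain ⟨w, hw⟩ : ∃ w : E, (mfderiv 𝓘(ℝ, ℝ) 𝓘(ℝ, E) (fun t => ψ (a * t)) 0 (1 : ℝ) : E) = w := ⟨_, rfl⟩
  have h1 : IsOneParamSubgroup (fun t => ψ (a * t)) w :=
    ⟨by simp [h.1], fun s t => by beta_reduce; rw [mul_add, h.2.1], hs, hw⟩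
  have h2 := DD_unique (onePar_DD h1) (DD_reparam (f := ψ) (a := fun s => a * s) (t := 0) (a' := a) (ξ := v)
    (by simpa using onePar_DD h) (by simpa using (hasDerivAt_id (0 : ℝ)).const_mul a))
  rwa [h2] at h1

theorem conj_mem_ideal
    (hbracket : ∀ (v w : L) (ψ : ℝ → G), IsOneParamSubgroup ψ (eq v) →
      HasDerivAt (fun t : ℝ => AdMap (ψ t) (eq w)) (eq ⁅v, w⁆) 0)
    (S : Set L) (U : Submodule ℝ L) (hU : ∀ x : L, ∀ u ∈ U, ⁅x, u⁆ ∈ U) (g h : G)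
    (hg : g ∈ integralSubgroup (G := G) eq S) (hh : h ∈ integralSubgroup (G := G) eq (U : Set L)) :
    g * h * g⁻¹ ∈ integralSubgroup (G := G) eq (U : Set L) :=
  conj_mem_integral eq U g (AdL_mem_of_closure eq hbracket S U (fun v _ => hU v) g hg) h hh

theorem surj_step
    (hexp : ∀ v : E, ∃ ψ : ℝ → G, IsOneParamSubgroup ψ v)
    (hbracket : ∀ (v w : L) (ψ : ℝ → G), IsOneParamSubgroup ψ (eq v) →
      HasDerivAt (fun t : ℝ => AdMap (ψ t) (eq w)) (eq ⁅v, w⁆) 0)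
    (N U V : Submodule ℝ L) (hUN : U ≤ N)
    (hV : ∀ x : L, ∀ u ∈ V, ⁅x, u⁆ ∈ V) (hVg : Good V) (hNU : ∀ x ∈ N, ∀ y ∈ U, ⁅x, y⁆ ∈ V)
    (p : G) (hp : p ∈ integralSubgroup (G := G) eq (U : Set L)) :
    ∀ X ∈ N, ∀ ψ : ℝ → G, IsOneParamSubgroup ψ (eq X) → ∃ X' ∈ N, ∃ ψ' : ℝ → G, IsOneParamSubgroup ψ' (eq X') ∧
      ∃ q ∈ integralSubgroup (G := G) eq (V : Set L), ψ 1 * p = ψ' 1 * q := by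
  have gen : ∀ Y ∈ U, ∀ φ : ℝ → G, IsOneParamSubgroup φ (eq Y) → ∀ t : ℝ,
    ∀ X ∈ N, ∀ ψ : ℝ → G, IsOneParamSubgroup ψ (eq X) → ∃ X' ∈ N, ∃ ψ' : ℝ → G, IsOneParamSubgroup ψ' (eq X') ∧
      ∃ q ∈ integralSubgroup (G := G) eq (V : Set L), ψ 1 * φ t = ψ' 1 * q := by
    intro Y hY φ hφ t X hX ψ hψ
    have hφ' := onePar_smul hφ t
    rw [← map_smul] at hφ'
    obtain ⟨ψ', hψ'⟩ := hexp (eq (X + t • Y))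
    have hm : X + t • Y ∈ N := N.add_mem hX (N.smul_mem t (hUN hY))
    refine ⟨X + t • Y, hm, ψ', hψ', _, ?_, (mul_inv_cancel_left (ψ' 1) _).symm⟩
    have h1 := exp_mul_exp eq hexp hbracket hVg (hV X) (hV (t • Y)) (X := X) (Y := t • Y) (by
      rw [← lie_skew, neg_mem_iff]
      exact hNU X hX _ (U.smul_mem t hY)) hψ hφ' hψ' 1
    simp only [mul_one] at h1
    have h2 := conj_mem_ideal eq hbracket (N : Set L) V hV (ψ' 1)⁻¹ _
      (inv_mem (Subgroup.subset_closure ⟨_, hm, ψ', hψ', 1, rfl⟩)) h1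
    convert h2 using 1
    group
  refine Subgroup.closure_induction'' (p := fun p _ => ∀ X ∈ N, ∀ ψ : ℝ → G, IsOneParamSubgroup ψ (eq X) → ∃ X' ∈ N, ∃ ψ' : ℝ → G, IsOneParamSubgroup ψ' (eq X') ∧
      ∃ q ∈ integralSubgroup (G := G) eq (V : Set L), ψ 1 * p = ψ' 1 * q) ?_ ?_ ?_ ?_ hp
  · rintro _ ⟨Y, hY, φ, hφ, t, rfl⟩
    exact gen Y hY φ hφ t
  · rintro _ ⟨Y, hY, φ, hφ, t, rfl⟩
    rw [onePar_inv hφ]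
    exact gen Y hY φ hφ (-t)
  · intro X hX ψ hψ
    exact ⟨X, hX, ψ, hψ, 1, one_mem _, rfl⟩
  · intro p₁ p₂ h₁ h₂ ih₁ ih₂ X hX ψ hψ
    obtain ⟨X', hX', ψ', hψ', q, hq, e⟩ := ih₁ X hX ψ hψ
    obtain ⟨X'', hX'', ψ'', hψ'', q', hq', e'⟩ := ih₂ X' hX' ψ' hψ'
    refine ⟨X'', hX'', ψ'', hψ'', q' * (p₂⁻¹ * q * p₂⁻¹⁻¹), mul_mem hq' ?_, ?_⟩
    · exact conj_mem_ideal eq hbracket (U : Set L) V hV _ _ (inv_mem h₂) hq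
    · rw [← mul_assoc, ← mul_assoc, e, ← e']
      group

theorem exp_surj
    (hexp : ∀ v : E, ∃ ψ : ℝ → G, IsOneParamSubgroup ψ v)
    (hbracket : ∀ (v w : L) (ψ : ℝ → G), IsOneParamSubgroup ψ (eq v) →
      HasDerivAt (fun t : ℝ => AdMap (ψ t) (eq w)) (eq ⁅v, w⁆) 0)
    (U : ℕ → Submodule ℝ L) (n : ℕ) (hU : ∀ k, ∀ x : L, ∀ u ∈ U k, ⁅x, u⁆ ∈ U k)
    (hanti : ∀ k, U (k + 1) ≤ U k) (hbot : U n = ⊥)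
    (hc : ∀ k, ∀ x ∈ U 0, ∀ y ∈ U k, ⁅x, y⁆ ∈ U (k + 1))
    (m : G) (hm : m ∈ integralSubgroup (G := G) eq (U 0 : Set L)) :
    ∃ X ∈ U 0, ∃ ψ : ℝ → G, IsOneParamSubgroup ψ (eq X) ∧ m = ψ 1 := by
  have hant : Antitone U := antitone_nat_of_succ_le hanti
  have hgood : ∀ k, Good (U k) := by
    have h1 : ∀ j k, n ≤ k + j → Good (U k) := by
      intro j
      induction j with
      | zero =>
        intro k hk
        have : U k = ⊥ := by
          rw [eq_bot_iff, ← hbot]; exact hant (by simpa using hk)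
        rw [this]; exact Good.bot
      | succ j ih =>
        intro k hk
        exact good_ext (ih (k + 1) (by omega)) (hanti k) fun e he u hu => hc k e (hant (Nat.zero_le k) he) u hu
    exact fun k => h1 n k (by omega)
  have key : ∀ k, ∃ X ∈ U 0, ∃ ψ : ℝ → G, IsOneParamSubgroup ψ (eq X) ∧
      ∃ q ∈ integralSubgroup (G := G) eq (U k : Set L), m = ψ 1 * q := by
    intro k
    induction k with
    | zero =>
      obtain ⟨ψ, hψ⟩ := hexp (eq (0 : L))
      refine ⟨0, zero_mem _, ψ, hψ, (ψ 1)⁻¹ * m, mul_mem (inv_mem (Subgroup.subset_closure ⟨0, zero_mem _, ψ, hψ, 1, rfl⟩)) hm, by group⟩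
    | succ k ih =>
      obtain ⟨X, hX, ψ, hψ, q, hq, rfl⟩ := ih
      exact surj_step eq hexp hbracket (U 0) (U k) (U (k + 1)) (hant (Nat.zero_le k)) (hU _) (hgood _) (hc k) q hq X hX ψ hψ
  obtain ⟨X, hX, ψ, hψ, q, hq, e⟩ := key n
  refine ⟨X, hX, ψ, hψ, ?_⟩
  have : integralSubgroup (G := G) eq (U n : Set L) ≤ ⊥ := by
    refine (Subgroup.closure_le _).2 ?_
    rintro _ ⟨v, hv, φ, hφ, t, rfl⟩
    have hv' : v = 0 := by rw [hbot] at hv; simpa using hv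
    subst hv'
    rw [map_zero] at hφ
    have := LD_zero (E := E) (onePar_LD hφ) t
    rw [hφ.1] at this
    simpa using this
  have hq1 : q = 1 := by simpa using this hq
  rw [e, hq1, mul_one]

end main2

section main3
open Filter Topology
set_option linter.unusedSectionVars false

variable {E : Type*} [NormedAddCommGroup E] [NormedSpace ℝ E] [FiniteDimensional ℝ E]
    {L : Type*} [LieRing L] [LieAlgebra ℝ L] [FiniteDimensional ℝ L]
    {G : Type*} [TopologicalSpace G] [Group G] [ChartedSpace E G] [LieGroup 𝓘(ℝ, E) (⊤ : ℕ∞) G]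
    [IsTopologicalGroup G]

/-- ordered product of one-parameter subgroups -/
def listP {ι : Type*} (ψ : ι → ℝ → G) (l : List ι) (x : ι → ℝ) : G := (l.map fun i => ψ i (x i)).prod

theorem listP_contMDiff {ι : Type*} [Fintype ι] (ψ : ι → ℝ → G) (v : ι → E)
    (hψ : ∀ i, IsOneParamSubgroup (ψ i) (v i)) (l : List ι) :
    ContMDiff 𝓘(ℝ, ι → ℝ) 𝓘(ℝ, E) (⊤ : ℕ∞) (listP ψ l) := by
  induction l with
  | nil => exact contMDiff_const
  | cons i l ih =>
    have h : ContMDiff 𝓘(ℝ, ι → ℝ) 𝓘(ℝ, E) (⊤ : ℕ∞) (fun x : ι → ℝ => ψ i (x i)) :=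
      (hψ i).2.2.1.comp (contMDiff_iff_contDiff.2 (contDiff_apply ℝ ℝ i))
    have := h.mul ih
    convert this using 1
    ext x
    simp [listP]

theorem listP_zero {ι : Type*} (ψ : ι → ℝ → G) (v : ι → E)
    (hψ : ∀ i, IsOneParamSubgroup (ψ i) (v i)) (l : List ι) : listP ψ l 0 = 1 := by
  unfold listP
  apply List.prod_eq_one
  intro g hg
  obtain ⟨i, _, rfl⟩ := List.mem_map.1 hg
  exact (hψ i).1

theorem listP_DD {ι : Type*} (ψ : ι → ℝ → G) (v : ι → E)
    (hψ : ∀ i, IsOneParamSubgroup (ψ i) (v i)) (l : List ι) (y : ι → ℝ) :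
    DD (fun t : ℝ => listP ψ l (t • y)) 0 (l.map fun i => y i • v i).sum := by
  induction l with
  | nil => exact DD_const 0
  | cons i l ih =>
    have h : DD (fun t : ℝ => ψ i (t * y i)) 0 (y i • v i) :=
      DD_reparam (f := ψ i) (a := fun s => s * y i) (t := 0) (a' := y i) (ξ := v i)
        (by simpa using onePar_DD (hψ i)) (by simpa using (hasDerivAt_id (0 : ℝ)).mul_const (y i))
    have := DD_mul h ih (by simp [(hψ i).1]) (by rw [zero_smul]; exact listP_zero ψ v hψ l)
    simpa [listP] using this

theorem gen_top_basis [ConnectedSpace G] (eq : L ≃ₗ[ℝ] E)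
    (hexp : ∀ v : E, ∃ ψ : ℝ → G, IsOneParamSubgroup ψ v)
    (S : Set L) {ι : Type*} [Fintype ι] (b : Module.Basis ι ℝ L) (hbS : ∀ i, b i ∈ S) :
    integralSubgroup (G := G) eq S = ⊤ := by
  have hM : IsManifold 𝓘(ℝ, E) (⊤ : ℕ∞) G := inferInstance
  have : CompleteSpace E := FiniteDimensional.complete ℝ E
  choose ψ hψ using fun i => hexp (eq (b i))
  set H := integralSubgroup (G := G) eq S with hH
  let l : List ι := (Finset.univ : Finset ι).toList
  have hPH : ∀ x, listP ψ l x ∈ H := by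
    intro x
    refine Subgroup.list_prod_mem _ fun g hg => ?_
    obtain ⟨i, _, rfl⟩ := List.mem_map.1 hg
    exact Subgroup.subset_closure ⟨b i, hbS i, ψ i, hψ i, _, rfl⟩
  have hP0 : listP ψ l 0 = 1 := listP_zero ψ _ hψ l
  have hPs := listP_contMDiff ψ _ hψ l
  have hd : ContDiffAt ℝ (⊤ : ℕ∞) (fun x => ch E G (listP ψ l x)) 0 :=
    contDiffAt_chart_comp (hPs 0) (by rw [hP0]; exact mem_source_one)
  have hstrict := hd.hasStrictFDerivAt (by simp)
  have hsurj : (fderiv ℝ (fun x => ch E G (listP ψ l x)) 0).range = ⊤ := by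
    rw [LinearMap.range_eq_top]
    intro e
    let y : ι → ℝ := fun i => b.repr (eq.symm e) i
    refine ⟨y, ?_⟩
    have h1 := (listP_DD ψ _ hψ l y).2
    have h2 : HasFDerivAt (fun x => ch E G (listP ψ l x))
      (fderiv ℝ (fun x => ch E G (listP ψ l x)) 0) ((0 : ℝ) • y) := by
      rw [zero_smul]; exact hstrict.hasFDerivAt
    have h3 := h2.comp_hasDerivAt (0 : ℝ) ((hasDerivAt_id (0 : ℝ)).smul_const y)
    have h4 := h1.unique h3
    have h5 : (l.map fun i => y i • eq (b i)).sum = e := by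
      rw [Finset.sum_map_toList]
      have := congrArg eq (b.sum_repr (eq.symm e))
      rw [map_sum, LinearEquiv.apply_symm_apply] at this
      simp only [map_smul] at this
      exact this
    rw [h5] at h4
    rw [h4]; simp
  have hmap := hstrict.map_nhds_eq_of_surj hsurj
  simp only [hP0] at hmap
  have hev : {e : E | (ch E G).symm e ∈ H} ∈ 𝓝 (ch E G 1) := by
    rw [← hmap, mem_map]
    have hsrc : (ch E G).source ∈ 𝓝 (listP ψ l 0) := by
      rw [hP0]; exact extChartAt_source_mem_nhds (1 : G)
    filter_upwards [hPs.continuous.continuousAt hsrc] with x hx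
    show (ch E G).symm (ch E G (listP ψ l x)) ∈ H
    rw [(ch E G).left_inv hx]
    exact hPH x
  have hnhds : (H : Set G) ∈ 𝓝 (1 : G) := by
    have hc : ContinuousAt (ch E G) 1 := continuousAt_extChartAt (1 : G)
    filter_upwards [hc hev, extChartAt_source_mem_nhds (I := 𝓘(ℝ, E)) (1 : G)] with g hg hs
    have hg' : (ch E G).symm (ch E G g) ∈ H := hg
    rwa [(ch E G).left_inv hs] at hg'
  have hopen : IsOpen (H : Set G) := H.isOpen_of_mem_nhds hnhds
  have hcl : IsClosed (H : Set G) := H.isClosed_of_isOpen hopen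
  have := IsClopen.eq_univ ⟨hcl, hopen⟩ ⟨1, H.one_mem⟩
  exact SetLike.coe_injective this

theorem gen_top [ConnectedSpace G] (eq : L ≃ₗ[ℝ] E)
    (hexp : ∀ v : E, ∃ ψ : ℝ → G, IsOneParamSubgroup ψ v)
    (S : Set L) (hS : Submodule.span ℝ S = ⊤) : integralSubgroup (G := G) eq S = ⊤ := by
  let b := Module.Basis.ofSpan (K := ℝ) (V := L) hS.ge
  let _ := FiniteDimensional.fintypeBasisIndex b
  exact gen_top_basis eq hexp S b fun i => Module.Basis.ofSpan_subset hS.ge ⟨i, rfl⟩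

/-- a nilpotent operator preserves every subspace preserved by its exponential -/
theorem nilp_preserve (A : E →L[ℝ] E) (n : ℕ) (hn : A ^ n = 0) (U : Submodule ℝ E)
    (hU : ∀ u ∈ U, NormedSpace.exp A u ∈ U) : ∀ u ∈ U, A u ∈ U := by
  have : CompleteSpace E := FiniteDimensional.complete ℝ E
  let T : ℕ → Submodule ℝ E := fun k => Submodule.span ℝ {x | ∃ j, k ≤ j ∧ ∃ u ∈ U, x = (A ^ j) u}
  have hTanti : ∀ {j k}, j ≤ k → T k ≤ T j := by
    intro j k hjk
    refine Submodule.span_mono ?_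
    rintro _ ⟨i, hi, u, hu, rfl⟩
    exact ⟨i, hjk.trans hi, u, hu, rfl⟩
  have hTA : ∀ k, ∀ x ∈ T k, A x ∈ T (k + 1) := by
    intro k x hx
    have : T k ≤ (T (k + 1)).comap A.toLinearMap := by
      refine Submodule.span_le.2 ?_
      rintro _ ⟨i, hi, u, hu, rfl⟩
      refine Submodule.subset_span ⟨i + 1, by omega, u, hu, ?_⟩
      rw [pow_succ']; rfl
    exact this hx
  have hTA' : ∀ k, ∀ x ∈ T k, A x ∈ T k := fun k x hx => hTanti (Nat.le_succ k) (hTA k x hx)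
  let B : E →L[ℝ] E := NormedSpace.exp A - 1
  have hBU : ∀ u ∈ U, B u ∈ U := fun u hu => U.sub_mem (hU u hu) hu
  have hBT : ∀ k, ∀ x ∈ T k, B x ∈ T (k + 1) := fun k x hx =>
    exp_sub_mem A _ (hTA' (k + 1)) x (hTA k x hx)
  have hBAT : ∀ k, ∀ x ∈ T k, B x - A x ∈ T (k + 2) := by
    intro k x hx
    have hclosed : IsClosed (T (k + 2) : Set E) := Submodule.closed_of_finiteDimensional _
    have h1 : HasSum (fun n : ℕ => ((n.factorial : ℝ)⁻¹ • A ^ n)) (NormedSpace.exp A) :=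
      NormedSpace.exp_series_hasSum_exp' (𝕂 := ℝ) A
    have h2 := (ContinuousLinearMap.apply ℝ E x).hasSum h1
    have h3 := (hasSum_nat_add_iff' 2).2 h2
    have h4 : ∀ n : ℕ, (A ^ (n + 2)) x ∈ T (k + 2) := by
      intro n
      induction n with
      | zero =>
        rw [pow_succ', pow_succ', pow_zero, mul_one]
        exact hTA _ _ (hTA _ _ hx)
      | succ n ih =>
        rw [pow_succ']
        exact hTA' _ _ ih
    have h5 : B x - A x = (ContinuousLinearMap.apply ℝ E x) (NormedSpace.exp A) - ∑ i ∈ Finset.range 2, (ContinuousLinearMap.apply ℝ E x) (((i.factorial : ℝ)⁻¹ • A ^ i)) := by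
      simp [B, Finset.sum_range_succ, sub_sub]
    rw [h5]
    refine hclosed.mem_of_tendsto h3 (Eventually.of_forall fun s => ?_)
    refine Submodule.sum_mem _ fun i _ => ?_
    exact Submodule.smul_mem _ _ (h4 i)
  have hBk : ∀ k, ∀ u ∈ U, (B ^ k) u ∈ U ∧ (B ^ k) u - (A ^ k) u ∈ T (k + 1) := by
    intro k u hu
    induction k with
    | zero => simpa using hu
    | succ k ih =>
      have e1 : (B ^ (k + 1)) u = B ((B ^ k) u) := by rw [pow_succ']; rfl
      have e2 : (A ^ (k + 1)) u = A ((A ^ k) u) := by rw [pow_succ']; rfl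
      refine ⟨by rw [e1]; exact hBU _ ih.1, ?_⟩
      have h1 := hBT _ _ ih.2
      have h2 := hBAT k ((A ^ k) u) (Submodule.subset_span ⟨k, le_rfl, u, hu, rfl⟩)
      have h3 := add_mem h1 h2
      rw [e1, e2]
      rw [map_sub, sub_add_sub_cancel] at h3
      exact h3
  have hTU : ∀ j k, n ≤ k + j → T k ≤ U := by
    intro j
    induction j with
    | zero =>
      intro k hk
      refine Submodule.span_le.2 ?_
      rintro _ ⟨i, hi, u, hu, rfl⟩
      have : A ^ i = 0 := pow_eq_zero_of_le (by omega) hn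
      rw [this]; exact U.zero_mem
    | succ j ih =>
      intro k hk
      have hk1 := ih (k + 1) (by omega)
      refine Submodule.span_le.2 ?_
      rintro _ ⟨i, hi, u, hu, rfl⟩
      rcases hi.eq_or_lt with rfl | hi
      · have h := hBk k u hu
        have := U.sub_mem h.1 (hk1 h.2)
        simpa using this
      · exact hk1 (Submodule.subset_span ⟨i, hi, u, hu, rfl⟩)
  intro u hu
  exact hTU n 1 (by omega) (Submodule.subset_span ⟨1, le_rfl, u, hu, by simp⟩)

end main3

/-- Let `G` be a connected, simply connected solvable Lie group whose Lie algebra is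
`L` (identified with the tangent space at the identity via `eq`, compatibly with
one-parameter subgroups and the adjoint action), and let `W` be the connected subgroup
corresponding to a Cartan subalgebra `𝔴` of `L`.  Then the center of `G` is contained
in `W`. -/
theorem center_le_cartan_subgroup
    {E : Type*} [NormedAddCommGroup E] [NormedSpace ℝ E] [FiniteDimensional ℝ E]
    {G : Type*} [TopologicalSpace G] [Group G] [ChartedSpace E G] [LieGroup 𝓘(ℝ, E) (⊤ : ℕ∞) G]
    [IsTopologicalGroup G] [SimplyConnectedSpace G]
    {L : Type*} [LieRing L] [LieAlgebra ℝ L] [FiniteDimensional ℝ L]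
    [LieAlgebra.IsSolvable L]
    (eq : L ≃ₗ[ℝ] E)
    (hexp : ∀ v : E, ∃ ψ : ℝ → G, IsOneParamSubgroup ψ v)
    (hbracket : ∀ (v w : L) (ψ : ℝ → G), IsOneParamSubgroup ψ (eq v) →
      HasDerivAt (fun t : ℝ => AdMap (ψ t) (eq w)) (eq ⁅v, w⁆) 0)
    (𝔴 : LieSubalgebra ℝ L) (h𝔴 : 𝔴.IsCartanSubalgebra) :
    Subgroup.center G ≤ integralSubgroup (G := G) eq (𝔴 : Set L) := by
  obtain ⟨F, n, hF0, hFanti, hFn, hFc⟩ := exists_chain (L := L)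
  let U : ℕ → Submodule ℝ L := fun k => (F k).toSubmodule
  have hU : ∀ k, ∀ x : L, ∀ u ∈ U k, ⁅x, u⁆ ∈ U k := fun k x u hu => (F k).lie_mem hu
  let S : Set L := (𝔴 : Set L) ∪ (U 0 : Set L)
  have hS : Submodule.span ℝ S = ⊤ := by
    rw [eq_top_iff, ← cartan_sup 𝔴 h𝔴, ← hF0]
    refine sup_le (fun x hx => Submodule.subset_span (Or.inl hx)) (fun x hx => Submodule.subset_span (Or.inr hx))
  have htop : integralSubgroup (G := G) eq S = ⊤ := gen_top eq hexp S hS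
  have hN : (integralSubgroup (G := G) eq (U 0 : Set L)).Normal :=
    ⟨fun h hh g => conj_mem_ideal eq hbracket S (U 0) (hU 0) g h (by rw [htop]; trivial) hh⟩
  intro z hz
  have hz' : z ∈ integralSubgroup (G := G) eq (𝔴 : Set L) ⊔ integralSubgroup (G := G) eq (U 0 : Set L) := by
    have h1 : integralSubgroup (G := G) eq S ≤
        integralSubgroup (G := G) eq (𝔴 : Set L) ⊔ integralSubgroup (G := G) eq (U 0 : Set L) := by
      refine (Subgroup.closure_le _).2 ?_
      rintro g ⟨v, hv | hv, h⟩
      · exact Subgroup.mem_sup_left (Subgroup.subset_closure ⟨v, hv, h⟩)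
      · exact Subgroup.mem_sup_right (Subgroup.subset_closure ⟨v, hv, h⟩)
    exact h1 (by rw [htop]; trivial)
  rw [Subgroup.mem_sup_of_normal_right] at hz'
  obtain ⟨w, hw, m, hm, hwm⟩ := hz'
  obtain ⟨X, hX, ψ, hψ, rfl⟩ := exp_surj eq hexp hbracket U n hU hFanti
    (by show (F n).toSubmodule = ⊥; rw [hFn]; rfl) hFc m hm
  have hpres : ∀ x ∈ 𝔴.toSubmodule.map eq.toLinearMap, NormedSpace.exp (adE eq X) x ∈ 𝔴.toSubmodule.map eq.toLinearMap := by
    intro x hx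
    have h1 : ψ 1 = w⁻¹ * z := by rw [← hwm]; group
    have h2 := AdL_exp eq hbracket hψ 1
    rw [one_smul] at h2
    rw [← h2, h1, AdL_mul, AdL_center z hz]
    exact AdL_mem_of_closure eq hbracket (𝔴 : Set L) 𝔴.toSubmodule (fun v hv u hu => 𝔴.lie_mem hv hu)
      w⁻¹ (inv_mem hw) x hx
  have hnil : ∃ k, (adE eq X) ^ k = 0 := by
    obtain ⟨k, hk⟩ := nil_real X (by rw [← hF0]; exact hX)
    refine ⟨k, ?_⟩
    have h1 : ∀ j, ∀ y : L, (adE eq X ^ j) (eq y) = eq ((LieAlgebra.ad ℝ L X ^ j) y) := by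
      intro j y
      induction j with
      | zero => simp
      | succ j ih =>
        rw [pow_succ', pow_succ']
        show adE eq X ((adE eq X ^ j) (eq y)) = eq (LieAlgebra.ad ℝ L X ((LieAlgebra.ad ℝ L X ^ j) y))
        rw [ih, adE_apply, LieAlgebra.ad_apply]
    ext x
    have := h1 k (eq.symm x)
    rw [hk] at this
    simpa using this
  obtain ⟨k, hk⟩ := hnil
  have hpr := nilp_preserve (adE eq X) k hk _ hpres
  have hX𝔴 : X ∈ 𝔴 := by
    rw [← h𝔴.self_normalizing, LieSubalgebra.mem_normalizer_iff]
    intro y hy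
    obtain ⟨u, hu, hu'⟩ := hpr (eq y) ⟨y, hy, rfl⟩
    rw [adE_apply] at hu'
    have : u = ⁅X, y⁆ := eq.injective hu'
    rw [← this]; exact hu
  rw [← hwm]
  exact mul_mem hw (Subgroup.subset_closure ⟨X, hX𝔴, ψ, hψ, 1, rfl⟩)

end
end
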